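/- arXiv:1704.05304 — 4 statements merged into one kernel-verified Lean document; each statement's English description precedes it below -/
import Mathlib

section
/- Let G be a finitely generated group with BVC, let K be a field, let d be a natural number, and let φ : G → GL(d, K) be a group homomorphism. Then the image (range) of φ is a virtually cyclic group. -/
/-- A group is *virtually cyclic* if it has a cyclic subgroup of finite index. -/
def VirtuallyCyclic (G : Type*) [Group G] : Prop :=
  ∃ H : Subgroup G, IsCyclic H ∧ H.FiniteIndex

/-- A group has *bVCyc* if there are finitely many virtually cyclic subgroups such that
every element lies in a conjugate of one of them. -/
def bVCyc (G : Type*) [Group G] : Prop :=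
  ∃ 𝒱 : Finset (Subgroup G), (∀ V ∈ 𝒱, VirtuallyCyclic V) ∧
    ∀ g : G, ∃ V ∈ 𝒱, ∃ x : G, x * g * x⁻¹ ∈ V

/-- A group has *BVC* if there are finitely many virtually cyclic subgroups such that
every virtually cyclic subgroup is contained in a conjugate of one of them. -/
def BVC (G : Type*) [Group G] : Prop :=
  ∃ 𝒱 : Finset (Subgroup G), (∀ V ∈ 𝒱, VirtuallyCyclic V) ∧
    ∀ W : Subgroup G, VirtuallyCyclic W →
      ∃ V ∈ 𝒱, ∃ x : G, ∀ w ∈ W, x * w * x⁻¹ ∈ V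

/-- A group has *bCyc* if there are finitely many elements g₁, …, gₙ such that every
element is conjugate to a power of some gᵢ. -/
def bCyc (G : Type*) [Group G] : Prop :=
  ∃ s : Finset G, ∀ g : G, ∃ a ∈ s, ∃ k : ℤ, IsConj g (a ^ k)

/-- An element is *primitive* if it cannot be written as a proper power. -/
def Primitive {G : Type*} [Group G] (g : G) : Prop :=
  ∀ (h : G) (n : ℤ), g = h ^ n → n = 1 ∨ n = -1

/-!
Let `Γ` be the image of `φ`, viewed as a matrix group over an algebraically closed field. It is
finitely generated and covered by the conjugates of finitely many virtually cyclic subgroups, so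
for some `m > 0` the `m`-th powers of its elements are, up to conjugacy, powers of finitely many
elements. Consequently the `m`-th powers of all eigenvalues occurring in a representation of `Γ`
are powers of finitely many numbers.

The main step is that `Γ` is finite or *virtually indicable*: some finite index subgroup has a
nontrivial homomorphism to `ℤ`.

* If all eigenvalues are roots of unity, there are only finitely many of them. By Burnside's trace
  argument the irreducible constituents of the representation have finite image, and an infinite
  unipotent part would give a homomorphism to `ℤ`.
* Otherwise Tits' argument gives a representation over an algebraically closed normed field in
  which some eigenvalue has absolute value different from `1`; in a suitable exterior power some
  `g ∈ Γ` is proximal: `D⁻ᵃ gᵃ` converges to a rank one projection `e fᵀ`, with `1 < ‖D‖`. Then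
  `gᵃ h` has an eigenvalue close to `Dᵃ ψ(h)`, where `ψ(h) = f ⬝ᵥ h e`. As its bounded power is a
  power of one of finitely many numbers, `ψ(h) ^ N` is zero or a power of `D` for a uniform `N`.
  This discreteness makes `ψ` multiplicative on a finite index subgroup where it does not vanish,
  and the exponent of `D` is the homomorphism to `ℤ`.

A virtually indicable `Γ` may be replaced by a finite index subgroup with a homomorphism onto an
infinite cyclic group. By Malcev's theorem it is residually finite. If the kernel were infinite,
finite quotients would separate more conjugacy classes inside one fibre than the covering subgroups
allow; so the kernel is finite and the group is virtually cyclic.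
-/

/-! ### Groups covered by conjugates of finitely many virtually cyclic subgroups -/

section VirtuallyCyclic

variable {G L : Type*} [Group G] [Group L]

theorem VirtuallyCyclic.of_surjective {f : G →* L} (hf : Function.Surjective f)
    (h : VirtuallyCyclic G) : VirtuallyCyclic L := by
  obtain ⟨C, hC, hCfin⟩ := h
  exact ⟨C.map f, isCyclic_of_surjective (f.subgroupMap C) (f.subgroupMap_surjective C),
    ⟨ne_zero_of_dvd_ne_zero hCfin.index_ne_zero (C.index_map_dvd hf)⟩⟩

theorem VirtuallyCyclic.of_injective {f : G →* L} (hf : Function.Injective f)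
    (h : VirtuallyCyclic L) : VirtuallyCyclic G := by
  obtain ⟨C, hC, hCfin⟩ := h
  refine ⟨C.comap f, isCyclic_of_injective (f.subgroupComap C) fun x y hxy ↦ ?_, ⟨?_⟩⟩
  · exact Subtype.ext (hf (congrArg Subtype.val hxy))
  · rw [Subgroup.index_comap]
    exact Subgroup.FiniteIndex.index_ne_zero (H := C.subgroupOf f.range)

theorem VirtuallyCyclic.of_finiteIndex {H : Subgroup G} [H.FiniteIndex]
    (h : VirtuallyCyclic H) : VirtuallyCyclic G := by
  obtain ⟨C, hC, hCfin⟩ := h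
  refine ⟨C.map H.subtype, isCyclic_of_surjective (H.subtype.subgroupMap C)
    (H.subtype.subgroupMap_surjective C), ⟨?_⟩⟩
  rw [Subgroup.index_map_subtype]
  exact mul_ne_zero hCfin.index_ne_zero Subgroup.FiniteIndex.index_ne_zero

theorem VirtuallyCyclic.of_finite [Finite G] : VirtuallyCyclic G :=
  ⟨⊥, inferInstance, inferInstance⟩

theorem VirtuallyCyclic.of_finite_ker [IsCyclic L] (f : G →* L) [Finite f.ker] :
    VirtuallyCyclic G := by
  obtain ⟨⟨_, g, rfl⟩, hg⟩ := IsCyclic.exists_generator (α := f.range)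
  have hsurj : Function.Surjective fun n : f.ker ↦ (n : G ⧸ Subgroup.zpowers g) := by
    intro q
    obtain ⟨x, rfl⟩ := QuotientGroup.mk_surjective q
    obtain ⟨k, hk⟩ := Subgroup.mem_zpowers_iff.1 (hg ⟨f x, x, rfl⟩)
    have hfx : f g ^ k = f x := congrArg Subtype.val hk
    refine ⟨⟨x * g ^ (-k), by simp [MonoidHom.mem_ker, ← hfx]⟩, ?_⟩
    exact (QuotientGroup.mk_mul_of_mem x (Subgroup.zpow_mem_zpowers g _))
  have : Finite (G ⧸ Subgroup.zpowers g) := .of_surjective _ hsurj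
  exact ⟨Subgroup.zpowers g, inferInstance, Subgroup.finiteIndex_of_finite_quotient⟩

theorem finite_of_inf_eq_bot {H N : Subgroup G} [H.FiniteIndex] (h : H ⊓ N = ⊥) : Finite N := by
  have hbot : (⊥ : Subgroup N).FiniteIndex := by
    rw [← Subgroup.subgroupOf_eq_bot.2 (disjoint_iff.2 h)]
    infer_instance
  refine Nat.finite_of_card_ne_zero ?_
  rw [← Subgroup.index_bot]
  exact hbot.index_ne_zero

theorem injective_of_isCyclic_of_ne_one [IsCyclic G] [IsMulTorsionFree L] {χ : G →* L}
    (hχ : χ ≠ 1) : Function.Injective χ := by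
  obtain ⟨t, ht⟩ := IsCyclic.exists_generator (α := G)
  have hχt : χ t ≠ 1 := by
    refine fun h ↦ hχ (MonoidHom.ext fun x ↦ ?_)
    obtain ⟨k, rfl⟩ := Subgroup.mem_zpowers_iff.1 (ht x)
    simp [h]
  rw [injective_iff_map_eq_one]
  intro x hx
  obtain ⟨k, rfl⟩ := Subgroup.mem_zpowers_iff.1 (ht x)
  rw [map_zpow, IsMulTorsionFree.zpow_eq_one_iff_right hχt] at hx
  rw [hx, zpow_zero]

theorem VirtuallyCyclic.finite_ker [IsMulTorsionFree L] (h : VirtuallyCyclic G) {χ : G →* L}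
    (hχ : χ ≠ 1) : Finite χ.ker := by
  obtain ⟨C, hC, hCfin⟩ := h
  have hne : χ.comp C.subtype ≠ 1 := by
    contrapose! hχ
    ext x
    have hx := DFunLike.congr_fun hχ ⟨x ^ C.normalCore.index,
      C.normalCore_le (Subgroup.pow_index_mem _ x)⟩
    exact (pow_eq_one_iff_left Subgroup.FiniteIndex.index_ne_zero).1 ((map_pow χ _ _).symm.trans hx)
  refine finite_of_inf_eq_bot (H := C) ((Subgroup.eq_bot_iff_forall _).2 fun x hx ↦ ?_)
  exact congrArg Subtype.val
    (injective_of_isCyclic_of_ne_one hne (a₁ := ⟨x, hx.1⟩) (a₂ := 1) (by simpa using hx.2))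

theorem VirtuallyCyclic.exists_encard_fiber_le [IsMulTorsionFree L] (h : VirtuallyCyclic G)
    (χ : G →* L) : ∃ c : ℕ, ∀ a ≠ 1, (χ ⁻¹' {a}).encard ≤ c := by
  refine ⟨Nat.card χ.ker, fun a ha ↦ ?_⟩
  obtain hempty | ⟨v, rfl⟩ := (χ ⁻¹' {a}).eq_empty_or_nonempty
  · simp [hempty]
  · have := h.finite_ker (χ := χ) fun hχ ↦ ha (by simp [hχ])
    exact ((ENat.card_congr (χ.fiberEquivKer v)).trans (ENat.card_eq_coe_natCard _)).le

theorem VirtuallyCyclic.exists_pow_mem_zpowers (h : VirtuallyCyclic G) :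
    ∃ t : G, ∃ n : ℕ, 0 < n ∧ ∀ g : G, g ^ n ∈ Subgroup.zpowers t := by
  obtain ⟨C, hC, hCfin⟩ := h
  obtain ⟨t, ht⟩ := hC.exists_generator
  refine ⟨t, C.normalCore.index, Nat.pos_of_ne_zero Subgroup.FiniteIndex.index_ne_zero,
    fun g ↦ ?_⟩
  obtain ⟨k, hk⟩ := Subgroup.mem_zpowers_iff.1
    (ht ⟨g ^ C.normalCore.index, C.normalCore_le (Subgroup.pow_index_mem _ g)⟩)
  exact Subgroup.mem_zpowers_iff.2 ⟨k, congrArg Subtype.val hk⟩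

end VirtuallyCyclic

section Covering

variable {G L : Type*} [Group G] [Group L]

theorem BVC.bVCyc (h : BVC G) : bVCyc G := by
  obtain ⟨𝒱, hV, hcov⟩ := h
  refine ⟨𝒱, hV, fun g ↦ ?_⟩
  obtain ⟨V, hVm, x, hx⟩ := hcov (Subgroup.zpowers g)
    (.of_surjective (f := (⊤ : Subgroup (Subgroup.zpowers g)).subtype) (fun x ↦ ⟨⟨x, trivial⟩, rfl⟩)
      ⟨⊤, inferInstance, inferInstance⟩)
  exact ⟨V, hVm, x, hx g (Subgroup.mem_zpowers g)⟩

theorem bVCyc.of_surjective {f : G →* L} (hf : Function.Surjective f) (h : bVCyc G) :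
    bVCyc L := by
  classical
  obtain ⟨𝒱, hV, hcov⟩ := h
  refine ⟨𝒱.image (Subgroup.map f), ?_, fun y ↦ ?_⟩
  · simp only [Finset.forall_mem_image]
    exact fun V hVm ↦ (hV V hVm).of_surjective (f.subgroupMap_surjective V)
  · obtain ⟨g, rfl⟩ := hf y
    obtain ⟨V, hVm, x, hx⟩ := hcov g
    exact ⟨_, Finset.mem_image_of_mem _ hVm, f x, _, hx, by simp⟩

/-- The covering subgroups of `H` are the traces on `H` of the conjugates of the covering subgroups
of `G` by coset representatives of `H`. -/
theorem bVCyc.subgroup (h : bVCyc G) (H : Subgroup G) [H.FiniteIndex] : bVCyc H := by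
  classical
  obtain ⟨𝒱, hV, hcov⟩ := h
  have := Fintype.ofFinite (G ⧸ H)
  let conjIncl (q : G ⧸ H) : H →* G := (MulAut.conj q.out).toMonoidHom.comp H.subtype
  refine ⟨(𝒱 ×ˢ Finset.univ).image fun p ↦ p.1.comap (conjIncl p.2), ?_, fun g ↦ ?_⟩
  · simp only [Finset.forall_mem_image, Finset.mem_product, Finset.mem_univ, and_true]
    intro p hp
    refine (hV p.1 hp).of_injective (f := (conjIncl p.2).subgroupComap p.1) fun x y hxy ↦ ?_
    exact Subtype.ext (((MulAut.conj _).injective.comp Subtype.val_injective)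
      (congrArg Subtype.val hxy))
  · obtain ⟨V, hVm, x, hx⟩ := hcov g
    obtain ⟨h, hh⟩ := QuotientGroup.mk_out_eq_mul H x
    refine ⟨_, Finset.mem_image_of_mem _ (Finset.mk_mem_product hVm (Finset.mem_univ ↑x)), h⁻¹, ?_⟩
    change MulAut.conj (x : G ⧸ H).out _ ∈ V
    rw [hh]
    simpa [mul_assoc] using hx

/-- The conclusion of `bVCyc` that survives in every linear representation: up to conjugacy and a
uniform exponent `m`, all elements of `G` are powers of finitely many ones. -/
def HasFinitePowerCover (G : Type*) [Group G] : Prop :=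
  ∃ m : ℕ, 0 < m ∧ ∃ C : Finset G, ∀ u : G, ∃ c ∈ C, ∃ k : ℕ, IsConj (u ^ m) (c ^ k)

theorem bVCyc.hasFinitePowerCover (h : bVCyc G) : HasFinitePowerCover G := by
  classical
  obtain ⟨𝒱, hV, hcov⟩ := h
  choose! t n hn ht using fun V hVm ↦ (hV V hVm).exists_pow_mem_zpowers
  refine ⟨∏ V ∈ 𝒱, n V, Finset.prod_pos hn,
    𝒱.image (fun V ↦ (t V : G)) ∪ 𝒱.image (fun V ↦ (t V : G)⁻¹), fun u ↦ ?_⟩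
  obtain ⟨V, hVm, x, hx⟩ := hcov u
  obtain ⟨k, hk⟩ : ∃ k : ℤ, (t V : G) ^ k = (x * u * x⁻¹) ^ ∏ V ∈ 𝒱, n V := by
    obtain ⟨r, hr⟩ := Finset.dvd_prod_of_mem n hVm
    obtain ⟨k, hk⟩ := Subgroup.mem_zpowers_iff.1 (pow_mem (ht V hVm ⟨_, hx⟩) r)
    exact ⟨k, by simpa [hr, pow_mul] using congrArg Subtype.val hk⟩
  have hconj : IsConj (u ^ ∏ V ∈ 𝒱, n V) ((t V : G) ^ k) :=
    isConj_iff.2 ⟨x, by rw [hk, conj_pow]⟩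
  obtain ⟨a, rfl | rfl⟩ := Int.eq_nat_or_neg k
  · exact ⟨t V, Finset.mem_union_left _ (Finset.mem_image_of_mem _ hVm), a, by simpa using hconj⟩
  · exact ⟨(t V)⁻¹, Finset.mem_union_right _ (Finset.mem_image.2 ⟨V, hVm, rfl⟩), a,
      by simpa using hconj⟩

theorem bVCyc.exists_encard_conjClasses_fiber_le {A : Type*} [CommGroup A] [IsMulTorsionFree A]
    (h : bVCyc G) (χ : G →* A) : ∃ c : ℕ, ∀ a ≠ 1, (ConjClasses.mk '' (χ ⁻¹' {a})).encard ≤ c := by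
  obtain ⟨𝒱, hV, hcov⟩ := h
  choose! c hc using fun V hVm ↦ (hV V hVm).exists_encard_fiber_le (χ.comp V.subtype)
  refine ⟨∑ V ∈ 𝒱, c V, fun a ha ↦ ?_⟩
  have hsub : ConjClasses.mk '' (χ ⁻¹' {a}) ⊆
      ⋃ V ∈ 𝒱, (fun v : V ↦ ConjClasses.mk (v : G)) '' (χ.comp V.subtype ⁻¹' {a}) := by
    rintro _ ⟨g, hg, rfl⟩
    obtain ⟨V, hVm, x, hx⟩ := hcov g
    refine Set.mem_biUnion hVm ⟨⟨_, hx⟩, ?_, ?_⟩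
    · simpa [mul_comm] using hg
    · exact (ConjClasses.mk_eq_mk_iff_isConj.2 (isConj_iff.2 ⟨x, rfl⟩)).symm
  calc _ ≤ _ := (Set.encard_le_encard hsub).trans (𝒱.set_encard_biUnion_le _)
    _ ≤ ∑ V ∈ 𝒱, (c V : ℕ∞) :=
      Finset.sum_le_sum fun V hVm ↦ (Set.encard_image_le _ _).trans (hc V hVm a ha)
    _ = _ := by push_cast; rfl

end Covering

section ResiduallyFinite

variable {G : Type*} [Group G]

/-- The image of `K` in the set of conjugacy classes of `G ⧸ M`. -/
def quotientConjClasses (K : Subgroup G) (M : Subgroup G) [M.Normal] : Set (ConjClasses (G ⧸ M)) :=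
  (fun k : G ↦ ConjClasses.mk (k : G ⧸ M)) '' K

theorem exists_encard_quotientConjClasses_lt [Group.ResiduallyFinite G] (K : Subgroup G)
    [Infinite K] (M : FiniteIndexNormalSubgroup G) :
    ∃ M' : FiniteIndexNormalSubgroup G, (quotientConjClasses K M.toSubgroup).encard + 1 ≤
      (quotientConjClasses K M'.toSubgroup).encard := by
  obtain ⟨n, hn, hn1⟩ : ∃ n ∈ M.toSubgroup ⊓ K, n ≠ 1 := by
    by_contra! h
    exact not_finite_iff_infinite.2 ‹Infinite K›
      (finite_of_inf_eq_bot ((Subgroup.eq_bot_iff_forall _).2 h))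
  obtain ⟨N, hnN⟩ := Group.exists_finiteIndexNormalSubgroup_notMem n hn1
  let π : G ⧸ (M ⊓ N).toSubgroup →* G ⧸ M.toSubgroup :=
    QuotientGroup.map _ _ (MonoidHom.id G) inf_le_left
  refine ⟨M ⊓ N, ?_⟩
  have hsub : quotientConjClasses K M.toSubgroup ⊆ ConjClasses.map π ''
      (quotientConjClasses K (M ⊓ N).toSubgroup \ {ConjClasses.mk (n : G ⧸ _)}) := by
    rintro _ ⟨k, hk, rfl⟩
    by_cases hkn : ConjClasses.mk (k : G ⧸ (M ⊓ N).toSubgroup) = ConjClasses.mk (n : G ⧸ _)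
    · refine ⟨ConjClasses.mk 1, ⟨⟨1, K.one_mem, rfl⟩, fun h1 ↦ ?_⟩, ?_⟩
      · rw [Set.mem_singleton_iff, ConjClasses.mk_eq_mk_iff_isConj, isConj_one_right,
          QuotientGroup.eq_one_iff] at h1
        exact hnN h1.2
      · have hπn : π (n : G ⧸ _) = 1 := (QuotientGroup.eq_one_iff n).2 hn.1
        calc ConjClasses.mk (π 1) = ConjClasses.map π (ConjClasses.mk (n : G ⧸ _)) := by
              rw [map_one, ← hπn]; rfl
          _ = _ := congrArg (ConjClasses.map π) hkn.symm
    · exact ⟨_, ⟨⟨k, hk, rfl⟩, hkn⟩, rfl⟩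
  have hmem : ConjClasses.mk (n : G ⧸ (M ⊓ N).toSubgroup) ∈ quotientConjClasses K _ :=
    ⟨n, hn.2, rfl⟩
  rw [← Set.encard_sdiff_singleton_add_one hmem]
  gcongr
  exact (Set.encard_le_encard hsub).trans (Set.encard_image_le _ _)

theorem finite_of_encard_quotientConjClasses_le [Group.ResiduallyFinite G] {K : Subgroup G} {c : ℕ}
    (h : ∀ M : FiniteIndexNormalSubgroup G, (quotientConjClasses K M.toSubgroup).encard ≤ c) :
    Finite K := by
  by_contra hK
  have := not_finite_iff_infinite.1 hK
  have hgrow (k : ℕ) : ∃ M : FiniteIndexNormalSubgroup G,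
      (k : ℕ∞) ≤ (quotientConjClasses K M.toSubgroup).encard := by
    induction k with
    | zero => exact ⟨.ofSubgroup ⊤, by simp⟩
    | succ k ih =>
      obtain ⟨M, hM⟩ := ih
      obtain ⟨M', hM'⟩ := exists_encard_quotientConjClasses_lt K M
      exact ⟨M', by push_cast; exact (add_le_add_left hM 1).trans hM'⟩
  obtain ⟨M, hM⟩ := hgrow (c + 1)
  exact absurd (hM.trans (h M)) (by norm_cast; omega)

/-- In a finite quotient `G ⧸ M` the kernel of `χ` and the fibre of `χ` through `t ^ M.index ∈ M`
have the same image, so they meet the same conjugacy classes there. -/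
theorem VirtuallyCyclic.of_bVCyc_of_residuallyFinite [Group.ResiduallyFinite G] (h : bVCyc G)
    {χ : G →* Multiplicative ℤ} (hχ : χ ≠ 1) : VirtuallyCyclic G := by
  obtain ⟨c, hc⟩ := h.exists_encard_conjClasses_fiber_le χ
  obtain ⟨t, ht⟩ : ∃ t, χ t ≠ 1 := by
    contrapose! hχ
    exact MonoidHom.ext hχ
  have : Finite χ.ker := by
    refine finite_of_encard_quotientConjClasses_le (c := c) fun M ↦ ?_
    have hsub : quotientConjClasses χ.ker M.toSubgroup ⊆
        ConjClasses.map (QuotientGroup.mk' M.toSubgroup) ''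
          (ConjClasses.mk '' (χ ⁻¹' {χ (t ^ M.toSubgroup.index)})) := by
      rintro _ ⟨n, hn, rfl⟩
      refine ⟨_, ⟨n * t ^ M.toSubgroup.index, ?_, rfl⟩, ?_⟩
      · simp [MonoidHom.mem_ker.1 hn]
      · exact congrArg ConjClasses.mk
          (QuotientGroup.mk_mul_of_mem n (Subgroup.pow_index_mem _ t))
    refine (Set.encard_le_encard hsub).trans ((Set.encard_image_le _ _).trans (hc _ ?_))
    rw [map_pow]
    exact fun h0 ↦ ht ((pow_eq_one_iff_left Subgroup.FiniteIndex.index_ne_zero).1 h0)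
  exact .of_finite_ker χ

end ResiduallyFinite

/-! ### Malcev's theorem -/

section Malcev

theorem isJacobsonRing_int : IsJacobsonRing ℤ := by
  refine isJacobsonRing_iff_prime_eq.2 fun P hP ↦ ?_
  obtain rfl | hbot := eq_or_ne P ⊥
  · refine le_antisymm (fun x hx ↦ ?_) Ideal.le_jacobson
    obtain ⟨p, hxp, hp⟩ := Nat.exists_infinite_primes (x.natAbs + 1)
    have hmax : (Ideal.span {(p : ℤ)}).IsMaximal :=
      PrincipalIdealRing.isMaximal_of_irreducible (Nat.prime_iff_prime_int.1 hp).irreducible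
    have hdvd := Ideal.mem_span_singleton.1 (Ideal.mem_sInf.1 hx ⟨bot_le, hmax⟩)
    exact Int.eq_zero_of_dvd_of_natAbs_lt_natAbs hdvd (by simpa using hxp)
  · have := hP.isMaximal hbot
    exact Ideal.jacobson_eq_self_of_isMaximal

theorem finite_of_field_of_finite_int (F : Type*) [Field F] [Module.Finite ℤ F] : Finite F := by
  obtain ⟨p, hp⟩ := CharP.exists F
  have hp0 : p ≠ 0 := by
    rintro rfl
    have := CharP.charP_to_charZero F
    exact Int.not_isField (isField_of_isIntegral_of_isField (RingHom.injective_int (algebraMap ℤ F))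
      (Field.toIsField F))
  refine Module.finite_of_fg_torsion F fun x ↦ ?_
  refine ⟨⟨p, mem_nonZeroDivisors_of_ne_zero (Nat.cast_ne_zero.2 hp0)⟩, ?_⟩
  change (p : ℤ) • x = 0
  simp [zsmul_eq_mul]

theorem exists_isMaximal_finite_quotient_notMem {A : Type*} [CommRing A] [IsReduced A]
    [Algebra.FiniteType ℤ A] {x : A} (hx : x ≠ 0) :
    ∃ m : Ideal A, m.IsMaximal ∧ Finite (A ⧸ m) ∧ x ∉ m := by
  have := isJacobsonRing_int
  have hjac : (⊥ : Ideal A).jacobson = ⊥ :=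
    (isJacobsonRing_of_finiteType (A := ℤ)).out Ideal.isRadical_bot
  obtain ⟨m, hm, hxm⟩ : ∃ m : Ideal A, m.IsMaximal ∧ x ∉ m := by
    by_contra! h
    exact hx (hjac.le (Ideal.mem_sInf.2 fun m hm ↦ h m hm.2))
  let _ : Field (A ⧸ m) := Ideal.Quotient.field m
  have : Algebra.FiniteType ℤ (A ⧸ m) :=
    .of_surjective (Ideal.Quotient.mkₐ ℤ m) (Ideal.Quotient.mkₐ_surjective ℤ m)
  have : Module.Finite ℤ (A ⧸ m) := finite_of_finite_type_of_isJacobsonRing ℤ (A ⧸ m)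
  exact ⟨m, hm, finite_of_field_of_finite_int _, hxm⟩

variable {Γ n L : Type*} [Fintype n] [DecidableEq n] [CommRing L]

theorem exists_fg_subalgebra_lift [Monoid Γ] [Monoid.FG Γ] (ρ : Γ →* Matrix n n L) {S : Set L}
    (hS : S.Finite) : ∃ A : Subalgebra ℤ L, A.FG ∧ S ⊆ A ∧
      ∃ ρ' : Γ →* Matrix n n A, ∀ γ, (ρ' γ).map A.val = ρ γ := by
  obtain ⟨T, hT⟩ := Monoid.FG.fg_top (M := Γ)
  let entries : Set L := ⋃ γ ∈ T, Set.range fun p : n × n ↦ ρ γ p.1 p.2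
  have hfin : (entries ∪ S).Finite :=
    (T.finite_toSet.biUnion fun γ _ ↦ Set.finite_range _).union hS
  let A := Algebra.adjoin ℤ (entries ∪ S)
  let ι : Matrix n n A →ₐ[ℤ] Matrix n n L := A.val.mapMatrix
  have hι : Function.Injective ι := Matrix.map_injective Subtype.val_injective
  have hmem (γ : Γ) : ρ γ ∈ ι.range := by
    have hle : Submonoid.closure (T : Set Γ) ≤ ι.range.toSubmonoid.comap ρ := by
      refine Submonoid.closure_le.2 fun γ hγ ↦ ⟨fun i j ↦ ⟨ρ γ i j, ?_⟩, rfl⟩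
      exact Algebra.subset_adjoin (.inl (Set.mem_biUnion hγ ⟨(i, j), rfl⟩))
    exact hle (hT ▸ Submonoid.mem_top γ)
  refine ⟨A, Subalgebra.fg_def.2 ⟨_, hfin, rfl⟩,
    Set.subset_union_right.trans Algebra.subset_adjoin,
    ((AlgEquiv.ofInjective ι hι).symm : _ →* _).comp (ρ.codRestrict ι.range hmem), fun γ ↦ ?_⟩
  exact congrArg Subtype.val ((AlgEquiv.ofInjective ι hι).apply_symm_apply ⟨ρ γ, hmem γ⟩)

theorem residuallyFinite_of_injective [Group Γ] [Group.FG Γ] [IsReduced L]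
    {ρ : Γ →* Matrix n n L} (hρ : Function.Injective ρ) : Group.ResiduallyFinite Γ := by
  obtain ⟨A, hA, -, ρA, hρA⟩ := exists_fg_subalgebra_lift ρ Set.finite_empty
  have : Algebra.FiniteType ℤ A := A.fg_iff_finiteType.1 hA
  have : IsReduced A := isReduced_of_injective A.val Subtype.val_injective
  refine Group.residuallyFinite_iff_exists_finiteIndex.2 fun g hg ↦ ?_
  have hg' : ρA g ≠ 1 := fun h ↦ hg (hρ (by simp [← hρA, h]))
  obtain ⟨i, j, hij⟩ : ∃ i j, (ρA g - 1) i j ≠ 0 := by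
    by_contra! h
    exact hg' (sub_eq_zero.1 (Matrix.ext h))
  obtain ⟨m, -, hfin, hm⟩ := exists_isMaximal_finite_quotient_notMem hij
  let reduction : Γ →* (Matrix n n (A ⧸ m))ˣ :=
    ((Ideal.Quotient.mk m).mapMatrix.toMonoidHom.comp ρA).toHomUnits
  refine ⟨reduction.ker, inferInstance, fun h ↦ hm (Ideal.Quotient.eq_zero_iff_mem.1 ?_)⟩
  have h1 : (Ideal.Quotient.mk m).mapMatrix (ρA g) = 1 := congrArg Units.val h
  have h0 : (Ideal.Quotient.mk m).mapMatrix (ρA g - 1) = 0 := by rw [map_sub, h1, map_one, sub_self]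
  exact congrFun (congrFun h0 i) j

end Malcev

/-! ### Representations with finitely many eigenvalues -/

section VirtuallyIndicable

open Module Polynomial

/-- The group has a finite index subgroup with a nontrivial homomorphism to `ℤ`. -/
def VirtuallyIndicable (Γ : Type*) [Group Γ] : Prop :=
  ∃ H : Subgroup Γ, H.FiniteIndex ∧ ∃ χ : H →* Multiplicative ℤ, χ ≠ 1

theorem exists_hom_int_ne_one (A : Type*) [CommGroup A] [Group.FG A] [Infinite A] :
    ∃ χ : A →* Multiplicative ℤ, χ ≠ 1 := by
  classical
  obtain ⟨n, ι, _, p, hp, e, ⟨f⟩⟩ := AddCommGroup.equiv_free_prod_directSum_zmod (Additive A)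
  obtain rfl | hn := Nat.eq_zero_or_pos n
  · have (i : ι) : NeZero (p i ^ e i) := ⟨pow_ne_zero _ (hp i).ne_zero⟩
    have : Finite (DirectSum ι fun i ↦ ZMod (p i ^ e i)) :=
      .of_equiv _ DFinsupp.equivFunOnFintype.symm
    exact absurd (Finite.of_equiv _ f.symm.toEquiv : Finite A) (not_finite_iff_infinite.2 ‹_›)
  · let coord : (Fin n →₀ ℤ) →+ ℤ := Finsupp.applyAddHom ⟨0, hn⟩
    refine ⟨((coord.comp (.fst _ _)).comp f.toAddMonoidHom).toMultiplicativeRight, fun h ↦ ?_⟩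
    have h1 := DFunLike.congr_fun h (f.symm (Finsupp.single ⟨0, hn⟩ 1, 0)).toMul
    have h2 : (1 : ℤ) = 0 := by simpa [coord] using congrArg Multiplicative.toAdd h1
    exact one_ne_zero h2

variable {Γ : Type*} [Group Γ]

theorem finiteIndex_ker_of_commGroup [Group.FG Γ] (hΓ : ¬ VirtuallyIndicable Γ) (H : Subgroup Γ)
    [H.FiniteIndex] {A : Type*} [CommGroup A] (f : H →* A) : f.ker.FiniteIndex := by
  have : Finite f.range := by
    by_contra hinf
    have := not_finite_iff_infinite.1 hinf
    obtain ⟨χ, hχ⟩ := exists_hom_int_ne_one f.range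
    refine hΓ ⟨H, inferInstance, χ.comp f.rangeRestrict, fun h ↦ hχ ?_⟩
    exact (MonoidHom.cancel_right f.rangeRestrict_surjective).1 h
  exact Subgroup.finiteIndex_ker f

theorem finiteIndex_ker_of_finite_range {M : Type*} [Monoid M] (ρ : Γ →* M)
    (h : (Set.range ρ).Finite) : ρ.ker.FiniteIndex := by
  have hker : ρ.ker = ρ.toHomUnits.ker := by
    ext x
    simp [MonoidHom.mem_ker]
  have : Finite ρ.toHomUnits.range := by
    refine Set.Finite.of_finite_image (f := Units.val) (h.subset ?_) Units.val_injective.injOn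
    rintro _ ⟨_, ⟨g, rfl⟩, rfl⟩
    exact ⟨g, rfl⟩
  rw [hker]
  exact Subgroup.finiteIndex_ker _

/-- On the finite index subgroup acting trivially on `U` and on the quotient by `U`, the map
`h ↦ ρ h - 1` is a homomorphism to an additive group. -/
theorem finiteIndex_ker_of_subrepresentation [Group.FG Γ] (hΓ : ¬ VirtuallyIndicable Γ)
    {R V : Type*} [Ring R] [AddCommGroup V] [Module R V] (ρ : Representation R Γ V)
    (U : Submodule R V) (hinv : ∀ g, U ≤ U.comap (ρ g))
    (hU : (ρ.subrepresentation U hinv).ker.FiniteIndex) (hQ : (ρ.quotient U hinv).ker.FiniteIndex) :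
    ρ.ker.FiniteIndex := by
  let H := (ρ.subrepresentation U hinv).ker ⊓ (ρ.quotient U hinv).ker
  have hHU (h : H) {u : V} (hu : u ∈ U) : ρ h u = u :=
    congrArg Subtype.val (LinearMap.congr_fun (MonoidHom.mem_ker.1 h.2.1) ⟨u, hu⟩)
  have hHQ (h : H) (v : V) : ρ h v - v ∈ U :=
    (Submodule.Quotient.eq U).1 (LinearMap.congr_fun (MonoidHom.mem_ker.1 h.2.2) (U.mkQ v))
  let f : H →* Multiplicative (End R V) :=
    { toFun := fun h ↦ .ofAdd (ρ h - 1)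
      map_one' := by simp
      map_mul' := fun x y ↦ by
        rw [← ofAdd_add]
        congr 1
        ext v
        have hfix : ρ x (ρ y v) - ρ x v = ρ y v - v := by rw [← map_sub, hHU x (hHQ y v)]
        simp only [Subgroup.coe_mul, map_mul, LinearMap.sub_apply, Module.End.mul_apply,
          Module.End.one_apply, LinearMap.add_apply, ← hfix]
        abel }
  have hf := finiteIndex_ker_of_commGroup hΓ H f
  have : (f.ker.map H.subtype).FiniteIndex := ⟨by
    rw [Subgroup.index_map_subtype]
    exact mul_ne_zero hf.index_ne_zero Subgroup.FiniteIndex.index_ne_zero⟩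
  refine Subgroup.finiteIndex_of_le (H := f.ker.map H.subtype) ?_
  rintro _ ⟨h, hh, rfl⟩
  exact sub_eq_zero.1 (congrArg Multiplicative.toAdd (MonoidHom.mem_ker.1 hh))

end VirtuallyIndicable

section Burnside

open Module Polynomial

variable {K V : Type*} [Field K] [AddCommGroup V] [Module K V]

theorem lsmul_surjective_of_isSimpleModule [IsAlgClosed K] [FiniteDimensional K V] (A : Type*)
    [Ring A] [Algebra K A] [Module A V] [IsScalarTower K A V] [IsSimpleModule A V] :
    Function.Surjective (Algebra.lsmul K K V : A →ₐ[K] End K V) := by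
  classical
  intro f
  have hschur := (IsSimpleModule.algebraMap_end_bijective_of_isAlgClosed (A := A) (V := V) K).2
  let F : End (End A V) V :=
    { f with
      map_smul' := fun c v ↦ by
        obtain ⟨k, rfl⟩ := hschur c
        simp }
  let b := Module.finBasis K V
  obtain ⟨a, ha⟩ := jacobson_density F (Finset.univ.image b)
  exact ⟨a, b.ext fun i ↦ (ha (b i) (Finset.mem_image_of_mem _ (Finset.mem_univ i))).symm⟩

theorem span_range_eq_top_of_isIrreducible [IsAlgClosed K] [FiniteDimensional K V] {Γ : Type*}
    [Monoid Γ] (ρ : Representation K Γ V) [ρ.IsIrreducible] :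
    Submodule.span K (Set.range ρ) = ⊤ := by
  let A := Algebra.adjoin K (Set.range ρ)
  have hspan : A.toSubmodule = Submodule.span K (Set.range ρ) := by
    rw [Algebra.adjoin_eq_span, ← MonoidHom.coe_mrange, Submonoid.closure_eq]
  let toSub (U : Submodule A V) : Subrepresentation ρ :=
    ⟨U.restrictScalars K, fun g _ hv ↦ U.smul_mem ⟨ρ g, Algebra.subset_adjoin ⟨g, rfl⟩⟩ hv⟩
  have : Nontrivial V := by
    obtain ⟨U, W, hUW⟩ := exists_pair_ne (Subrepresentation ρ)
    by_contra! h
    exact hUW (Subrepresentation.toSubmodule_injective (Subsingleton.elim _ _))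
  have : IsSimpleModule A V := isSimpleModule_iff _ _ |>.2
    { eq_bot_or_eq_top := fun U ↦ (eq_bot_or_eq_top (toSub U)).imp
        (fun h ↦ (Submodule.restrictScalars_eq_bot_iff _ _ _).1 (congrArg (·.toSubmodule) h))
        (fun h ↦ (Submodule.restrictScalars_eq_top_iff _ _ _).1 (congrArg (·.toSubmodule) h)) }
  rw [← hspan, Submodule.eq_top_iff']
  intro f
  obtain ⟨a, rfl⟩ := lsmul_surjective_of_isSimpleModule A f
  exact a.2

theorem isRoot_of_hasEigenvalue_of_aeval_eq_zero {f : End K V} {p : K[X]} (hp : aeval f p = 0)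
    {μ : K} (hμ : f.HasEigenvalue μ) : p.IsRoot μ := by
  obtain ⟨v, hv⟩ := hμ.exists_hasEigenvector
  have h := Module.End.aeval_apply_of_hasEigenvector (p := p) hv
  rw [hp, LinearMap.zero_apply] at h
  exact (smul_eq_zero.1 h.symm).resolve_right hv.2

variable [FiniteDimensional K V]

theorem eq_of_forall_trace_mul_eq {f g : End K V}
    (h : ∀ z : End K V, LinearMap.trace K V (f * z) = LinearMap.trace K V (g * z)) : f = g := by
  classical
  let b := Module.finBasis K V
  apply (LinearMap.toMatrixAlgEquiv b).injective
  refine Matrix.ext_iff_trace_mul_right.2 fun Z ↦ ?_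
  have hZ := h ((LinearMap.toMatrixAlgEquiv b).symm Z)
  have htoMatrix (w : End K V) : LinearMap.toMatrix b b w = LinearMap.toMatrixAlgEquiv b w := rfl
  simpa only [LinearMap.trace_eq_matrix_trace K b, htoMatrix, map_mul,
    AlgEquiv.apply_symm_apply] using hZ

theorem finite_trace_of_aeval_eq_zero [IsAlgClosed K] {p : K[X]} (hp : p ≠ 0) :
    (LinearMap.trace K V '' {f | aeval f p = 0}).Finite := by
  classical
  refine ((p.roots.toFinset.sym (finrank K V)).finite_toSet.image
    fun s : Sym K (finrank K V) ↦ (s : Multiset K).sum).subset ?_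
  rintro _ ⟨f, hf, rfl⟩
  have hsplit : f.charpoly.Splits := IsAlgClosed.splits _
  refine ⟨⟨f.charpoly.roots, ?_⟩, Finset.mem_sym_iff.2 fun μ hμ ↦ ?_, ?_⟩
  · rw [← f.charpoly_natDegree]
    exact hsplit.natDegree_eq_card_roots.symm
  · have hμ : μ ∈ f.charpoly.roots := hμ
    rw [mem_roots f.charpoly_monic.ne_zero, ← Module.End.hasEigenvalue_iff_isRoot_charpoly] at hμ
    exact Multiset.mem_toFinset.2
      ((mem_roots hp).2 (isRoot_of_hasEigenvalue_of_aeval_eq_zero hf hμ))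
  · exact (Module.End.trace_eq_sum_roots_charpoly_of_splits hsplit).symm

theorem finite_range_of_finite_trace {Γ : Type*} [Monoid Γ] {ρ : Representation K Γ V}
    (hspan : Submodule.span K (Set.range ρ) = ⊤)
    (htr : (Set.range fun g ↦ LinearMap.trace K V (ρ g)).Finite) : (Set.range ρ).Finite := by
  obtain ⟨b, hbρ, hbspan, hb⟩ := exists_linearIndependent K (Set.range ρ)
  have : Finite b := hb.finite
  let τ (f : End K V) (i : b) : K := LinearMap.trace K V (f * i)
  have hτ : Function.Injective τ := by
    refine fun f g hfg ↦ eq_of_forall_trace_mul_eq fun z ↦ ?_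
    have hz : z ∈ Submodule.span K b := by simp [hbspan, hspan]
    induction hz using Submodule.span_induction with
    | mem z hz => exact congrFun hfg ⟨z, hz⟩
    | zero => simp
    | add z w _ _ hz hw => simp [mul_add, hz, hw]
    | smul c z _ hz => simp [hz]
  refine .of_finite_image (f := τ) ((Set.Finite.pi' fun _ ↦ htr).subset ?_) hτ.injOn
  rintro _ ⟨_, ⟨g, rfl⟩, rfl⟩ i
  obtain ⟨h, hh⟩ := hbρ i.2
  exact ⟨g * h, by simp only [τ, ← hh, map_mul]⟩

end Burnside

section Annihilated

open Module Polynomial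

variable {K : Type*} [Field K]

theorem aeval_comp_of_comp_eq {V W : Type*} [AddCommGroup V] [Module K V]
    [AddCommGroup W] [Module K W] {ι : V →ₗ[K] W} {a : End K V} {b : End K W}
    (h : ι ∘ₗ a = b ∘ₗ ι) (p : K[X]) : ι ∘ₗ aeval a p = aeval b p ∘ₗ ι := by
  have hpow (n : ℕ) : ι ∘ₗ (a ^ n) = (b ^ n) ∘ₗ ι := by
    induction n with
    | zero => rfl
    | succ n ih =>
      rw [pow_succ', pow_succ', Module.End.mul_eq_comp, Module.End.mul_eq_comp,
        ← LinearMap.comp_assoc, h, LinearMap.comp_assoc, ih, LinearMap.comp_assoc]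
  induction p using Polynomial.induction_on' with
  | add p q hp hq => simp [hp, hq, LinearMap.comp_add, LinearMap.add_comp]
  | monomial n c =>
    ext v
    simpa [aeval_monomial] using congrArg (c • ·) (LinearMap.congr_fun (hpow n) v)

variable {Γ V : Type*} [Group Γ] [AddCommGroup V] [Module K V] [FiniteDimensional K V]

theorem finiteIndex_ker_of_aeval_eq_zero [Group.FG Γ] [IsAlgClosed K] (hΓ : ¬ VirtuallyIndicable Γ)
    {p : K[X]} (hp : p ≠ 0) (ρ : Representation K Γ V) (hρ : ∀ g, aeval (ρ g) p = 0) :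
    ρ.ker.FiniteIndex := by
  induction hn : finrank K V using Nat.strong_induction_on generalizing V with
  | _ n ih =>
  obtain hV | hV := subsingleton_or_nontrivial V
  · have : ρ.ker = ⊤ := (Subgroup.eq_top_iff' _).2 fun g ↦ Subsingleton.elim (ρ g) 1
    rw [this]
    infer_instance
  by_cases hirr : ρ.IsIrreducible
  · refine finiteIndex_ker_of_finite_range ρ (finite_range_of_finite_trace
      (span_range_eq_top_of_isIrreducible ρ)
      ((finite_trace_of_aeval_eq_zero (V := V) hp).subset ?_))
    rintro _ ⟨g, rfl⟩
    exact ⟨_, hρ g, rfl⟩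
  obtain ⟨U, hbot, htop⟩ : ∃ U : Subrepresentation ρ, U ≠ ⊥ ∧ U ≠ ⊤ := by
    by_contra! h
    exact hirr
      { exists_pair_ne := ⟨⊥, ⊤, fun h ↦ bot_ne_top (congrArg (·.toSubmodule) h)⟩
        eq_bot_or_eq_top := fun U ↦ or_iff_not_imp_left.2 (h U) }
  obtain ⟨U, hU⟩ := U
  replace hbot : U ≠ ⊥ := fun h ↦ hbot (Subrepresentation.toSubmodule_injective h)
  replace htop : U ≠ ⊤ := fun h ↦ htop (Subrepresentation.toSubmodule_injective h)
  have hQ : finrank K (V ⧸ U) < finrank K V := by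
    have := Submodule.finrank_quotient_add_finrank U
    have := Submodule.one_le_finrank_iff.2 hbot
    omega
  refine finiteIndex_ker_of_subrepresentation hΓ ρ U hU
    (ih _ (hn ▸ Submodule.finrank_lt htop) _ (fun g ↦ ?_) rfl)
    (ih _ (hn ▸ hQ) _ (fun g ↦ ?_) rfl)
  · have h := aeval_comp_of_comp_eq (ι := U.subtype) (a := ρ.subrepresentation U hU g) rfl p
    rw [hρ, LinearMap.zero_comp] at h
    exact (LinearMap.cancel_left U.injective_subtype).1 (h.trans (LinearMap.comp_zero _).symm)
  · have h := aeval_comp_of_comp_eq (ι := U.mkQ) (b := ρ.quotient U hU g) rfl p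
    rw [hρ, LinearMap.comp_zero] at h
    exact (LinearMap.cancel_right U.mkQ_surjective).1 (h.symm.trans (LinearMap.zero_comp _).symm)

theorem charpoly_dvd_prod_pow_of_spectrum_subset [IsAlgClosed K] {f : End K V} {S : Finset K}
    (hS : spectrum K f ⊆ S) : f.charpoly ∣ (∏ r ∈ S, (X - C r)) ^ finrank K V := by
  classical
  have hle : f.charpoly.roots ≤ finrank K V • S.val := by
    refine Multiset.le_iff_count.2 fun r ↦ ?_
    by_cases hr : r ∈ f.charpoly.roots
    · have hrS : r ∈ S := by
        rw [mem_roots f.charpoly_monic.ne_zero,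
          ← Module.End.hasEigenvalue_iff_isRoot_charpoly] at hr
        exact hS hr.mem_spectrum
      rw [Multiset.count_nsmul, Multiset.count_eq_one_of_mem S.nodup hrS, mul_one,
        ← f.charpoly_natDegree]
      exact (Multiset.count_le_card _ _).trans (card_roots' _)
    · simp [Multiset.count_eq_zero.2 hr]
  rw [(IsAlgClosed.splits f.charpoly).eq_prod_roots_of_monic f.charpoly_monic]
  convert Multiset.prod_dvd_prod_of_le (Multiset.map_le_map (f := fun r ↦ X - C r) hle)
  rw [Multiset.map_nsmul, Multiset.prod_nsmul]
  rfl

theorem finiteIndex_ker_of_finite_spectrum [Group.FG Γ] [IsAlgClosed K]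
    (hΓ : ¬ VirtuallyIndicable Γ) (ρ : Representation K Γ V)
    (hρ : (⋃ g, spectrum K (ρ g)).Finite) : ρ.ker.FiniteIndex := by
  refine finiteIndex_ker_of_aeval_eq_zero hΓ
    (p := (∏ r ∈ hρ.toFinset, (X - C r)) ^ finrank K V) ?_ ρ fun g ↦ ?_
  · exact pow_ne_zero _ (Finset.prod_ne_zero_iff.2 fun r _ ↦ X_sub_C_ne_zero r)
  · have hg : spectrum K (ρ g) ⊆ hρ.toFinset := by
      simpa using Set.subset_iUnion (fun g ↦ spectrum K (ρ g)) g
    exact aeval_eq_zero_of_dvd_aeval_eq_zero (charpoly_dvd_prod_pow_of_spectrum_subset hg)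
      (ρ g).aeval_self_charpoly

end Annihilated

/-! ### Finitely power covered sets in a normed field -/

section FinitePowerCover

open Filter Topology

/-- Up to a uniform exponent `m`, the elements of `S` are powers of finitely many ones: the property
of sets of eigenvalues corresponding to `HasFinitePowerCover`. -/
def IsFinitelyPowerCovered {M : Type*} [Monoid M] (S : Set M) : Prop :=
  ∃ m : ℕ, 0 < m ∧ ∃ 𝓜 : Finset M, ∀ θ ∈ S, ∃ μ ∈ 𝓜, ∃ k : ℕ, θ ^ m = μ ^ k

theorem HasFinitePowerCover.isFinitelyPowerCovered_spectrum {Γ K n : Type*} [Group Γ] [Field K]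
    [IsAlgClosed K] [Fintype n] [DecidableEq n] (h : HasFinitePowerCover Γ)
    (ρ : Γ →* Matrix n n K) : IsFinitelyPowerCovered (⋃ u, spectrum K (ρ u)) := by
  classical
  obtain ⟨m, hm, C, hC⟩ := h
  refine ⟨m, hm, C.biUnion fun c ↦ (Matrix.finite_spectrum (ρ c)).toFinset, fun θ hθ ↦ ?_⟩
  obtain ⟨u, hu⟩ := Set.mem_iUnion.1 hθ
  obtain ⟨c, hc, k, hck⟩ := hC u
  have : Nontrivial (Matrix n n K) := by
    by_contra! hsub
    simp [spectrum.of_subsingleton] at hu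
  have hconj : spectrum K (ρ u ^ m) = spectrum K (ρ c ^ k) := by
    obtain ⟨v, hv⟩ := ρ.map_isConj hck
    rw [← map_pow, ← map_pow, ← v.mul_inv_eq_iff_eq_mul.2 hv.eq, spectrum.units_conjugate]
  obtain ⟨μ, hμ, hμk⟩ : θ ^ m ∈ (· ^ k) '' spectrum K (ρ c) := by
    rw [← spectrum.map_pow_of_nonempty
      (spectrum.nonempty_of_isAlgClosed_of_finiteDimensional K (ρ c)), ← hconj]
    exact spectrum.pow_mem_pow _ m hu
  exact ⟨μ, by simpa using ⟨c, hc, hμ⟩, k, hμk.symm⟩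

variable {Ω : Type*} [NormedField Ω] {D : Ω}

theorem eventually_eq_of_tendsto_zpow {ι : Type*} (hD : 1 < ‖D‖) {F : Filter ι} [F.NeBot]
    {k : ι → ℤ} {y : Ω} (hy : y ≠ 0) (h : Tendsto (fun a ↦ D ^ k a) F (𝓝 y)) :
    ∃ c : ℤ, y = D ^ c ∧ ∀ᶠ a in F, k a = c := by
  have hlim : Tendsto (fun a ↦ ‖D‖ ^ k a) F (𝓝 ‖y‖) := by simpa only [norm_zpow] using h.norm
  have hlog : Tendsto (fun a ↦ (k a : ℝ)) F (𝓝 (Real.log ‖y‖ / Real.log ‖D‖)) := by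
    refine ((hlim.log (norm_ne_zero_iff.2 hy)).div_const _).congr fun a ↦ ?_
    rw [Real.log_zpow, mul_div_cancel_right₀ _ (Real.log_pos hD).ne']
  obtain ⟨c, hc⟩ : Real.log ‖y‖ / Real.log ‖D‖ ∈ Set.range ((↑) : ℤ → ℝ) :=
    Int.isClosedEmbedding_coe_real.isClosed_range.mem_of_tendsto hlog
      (.of_forall fun a ↦ ⟨k a, rfl⟩)
  have hkc : ∀ᶠ a in F, k a = c := by
    rw [← hc] at hlog
    have := Int.isClosedEmbedding_coe_real.isInducing.tendsto_nhds_iff.2 hlog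
    rwa [nhds_discrete, tendsto_pure] at this
  refine ⟨c, tendsto_nhds_unique h (tendsto_const_nhds.congr' ?_), hkc⟩
  filter_upwards [hkc] with a ha using by rw [ha]

theorem exists_frequently_eq_of_mem_finset {α : Type*} {s : Finset α} {u : ℕ → α}
    (hu : ∀ a, u a ∈ s) :
    ∃ x ∈ s, ∃ i j, i < j ∧ ∃ᶠ a in atTop, u (a + i) = x ∧ u (a + j) = x := by
  let U : Ultrafilter ℕ := hyperfilter ℕ
  have hU : (U : Filter ℕ) ≤ atTop := Nat.cofinite_eq_atTop ▸ hyperfilter_le_cofinite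
  have hconst (i : ℕ) : ∃ x ∈ s, ∀ᶠ a in (U : Filter ℕ), u (a + i) = x :=
    (Ultrafilter.eventually_exists_mem_iff (is := (s : Set α)) s.finite_toSet).1
      (.of_forall fun a ↦ ⟨_, hu _, rfl⟩)
  choose x hx hxu using hconst
  obtain ⟨i, -, j, -, hij, hxij⟩ := Set.infinite_univ.exists_lt_map_eq_of_mapsTo
    (fun i _ ↦ hx i) s.finite_toSet
  exact ⟨x i, hx i, i, j, hij, (((hxu i).and (hxij ▸ hxu j)).frequently).filter_mono hU⟩

theorem exists_pow_eq_zpow_of_tendsto {ι : Type*} {F : Filter ι} [F.NeBot] (hD : 1 < ‖D‖) {μ y : Ω}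
    (hy : y ≠ 0) {k k' b : ι → ℕ} {t : ℕ} (ht : 0 < t) (hb : Tendsto b F atTop)
    (hk : Tendsto (fun a ↦ (D ^ b a)⁻¹ * μ ^ k a) F (𝓝 y))
    (hk' : Tendsto (fun a ↦ (D ^ (b a + t))⁻¹ * μ ^ k' a) F (𝓝 y)) :
    ∃ J : ℕ, 0 < J ∧ ∃ c : ℤ, μ ^ J = D ^ c := by
  have hD0 : D ≠ 0 := norm_pos_iff.1 (one_pos.trans hD)
  have hμ : 1 < ‖μ‖ := by
    by_contra! hle
    refine hy (tendsto_nhds_unique hk (squeeze_zero_norm (fun a ↦ ?_)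
      ((tendsto_pow_atTop_nhds_zero_of_lt_one (inv_nonneg.2 (norm_nonneg D))
        (inv_lt_one_of_one_lt₀ hD)).comp hb)))
    rw [norm_mul, norm_pow, norm_inv, norm_pow, ← inv_pow]
    exact mul_le_of_le_one_right (by positivity) (pow_le_one₀ (norm_nonneg _) hle)
  have hμ0 : μ ≠ 0 := norm_pos_iff.1 (one_pos.trans hμ)
  have hratio : Tendsto (fun a ↦ μ ^ ((k' a : ℤ) - k a)) F (𝓝 (D ^ t)) := by
    have h := (hk'.div hk hy).const_mul (D ^ t)
    rw [div_self hy, mul_one] at h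
    refine h.congr fun a ↦ ?_
    rw [Pi.div_apply, zpow_sub₀ hμ0, zpow_natCast, zpow_natCast, pow_add]
    field_simp
  obtain ⟨c, hc, -⟩ := eventually_eq_of_tendsto_zpow hμ (pow_ne_zero _ hD0) hratio
  have hc0 : 0 < c := by
    rw [← one_lt_zpow_iff_right₀ hμ, ← norm_zpow, ← hc, norm_pow]
    exact one_lt_pow₀ hD ht.ne'
  exact ⟨c.toNat, by omega, t, by
    rw [← zpow_natCast, Int.toNat_of_nonneg hc0.le, ← hc, zpow_natCast]⟩

theorem exists_pow_eq_zpow_of_pow_eq_zpow {ι : Type*} {F : Filter ι} [F.NeBot] (hD : 1 < ‖D‖)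
    {μ y : Ω} (hy : y ≠ 0) {k b : ι → ℕ} (hk : Tendsto (fun a ↦ (D ^ b a)⁻¹ * μ ^ k a) F (𝓝 y))
    {J : ℕ} {q : ℤ} (hJ : μ ^ J = D ^ q) : ∃ c : ℤ, y ^ J = D ^ c := by
  have hD0 : D ≠ 0 := norm_pos_iff.1 (one_pos.trans hD)
  have h : Tendsto (fun a ↦ D ^ (q * k a - (b a * J : ℕ))) F (𝓝 (y ^ J)) := by
    refine (hk.pow J).congr fun a ↦ ?_
    rw [mul_pow, ← pow_mul, mul_comm (k a), pow_mul, hJ, inv_pow, ← pow_mul, zpow_sub₀ hD0,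
      zpow_mul, zpow_natCast, zpow_natCast, mul_comm, div_eq_mul_inv]
  obtain ⟨c, hc, -⟩ := eventually_eq_of_tendsto_zpow hD (pow_ne_zero _ hy) h
  exact ⟨c, hc⟩

/-- If `θ a` is asymptotic to `D ^ a * x`, then two indices `a + i` and `a + j` whose eigenvalues
are powers of the same `μ` show that `μ` is commensurable with `D`, hence so is `x`. -/
theorem IsFinitelyPowerCovered.exists_pow_eq_zpow {S : Set Ω} (hS : IsFinitelyPowerCovered S)
    (hD : 1 < ‖D‖) : ∃ N : ℕ, 0 < N ∧ ∀ (θ : ℕ → Ω) (x : Ω), (∀ a, θ a ∈ S) → x ≠ 0 →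
      Tendsto (fun a ↦ (D ^ a)⁻¹ * θ a) atTop (𝓝 x) → ∃ c : ℤ, x ^ N = D ^ c := by
  classical
  obtain ⟨m, hm, 𝓜, h𝓜⟩ := hS
  let J (μ : Ω) : ℕ := if h : ∃ J : ℕ, 0 < J ∧ ∃ c : ℤ, μ ^ J = D ^ c then h.choose else 1
  have hJpos (μ : Ω) : 0 < J μ := by
    simp only [J]
    split_ifs with h
    exacts [h.choose_spec.1, one_pos]
  refine ⟨m * ∏ μ ∈ 𝓜, J μ, Nat.mul_pos hm (Finset.prod_pos fun μ _ ↦ hJpos μ), ?_⟩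
  intro θ x hθ hx hlim
  choose μ hμ k hk using fun a ↦ h𝓜 (θ a) (hθ a)
  obtain ⟨ν, hν, i, j, hij, hfreq⟩ := exists_frequently_eq_of_mem_finset hμ
  let F : Filter ℕ := atTop ⊓ 𝓟 {a | μ (a + i) = ν ∧ μ (a + j) = ν}
  have : F.NeBot := frequently_mem_iff_neBot.1 hfreq
  have hF : ∀ᶠ a in F, μ (a + i) = ν ∧ μ (a + j) = ν := mem_inf_of_right (mem_principal_self _)
  have hpow (l : ℕ) (hl : ∀ᶠ a in F, μ (a + l) = ν) :
      Tendsto (fun a ↦ (D ^ (m * (a + l)))⁻¹ * ν ^ k (a + l)) F (𝓝 (x ^ m)) := by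
    refine (((hlim.comp (tendsto_add_atTop_nat l)).pow m).mono_left inf_le_left).congr' ?_
    filter_upwards [hl] with a ha
    rw [Function.comp_apply, mul_pow, hk, ha, inv_pow, ← pow_mul, mul_comm m]
  have hi := hpow i (hF.mono fun _ h ↦ h.1)
  have hj := hpow j (hF.mono fun _ h ↦ h.2)
  have hb : Tendsto (fun a ↦ m * (a + i)) F atTop :=
    ((tendsto_add_atTop_nat i).const_mul_atTop' hm).mono_left inf_le_left
  have hJν : ∃ c : ℤ, ν ^ J ν = D ^ c := by
    have h : ∃ J : ℕ, 0 < J ∧ ∃ c : ℤ, ν ^ J = D ^ c := by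
      refine exists_pow_eq_zpow_of_tendsto hD (pow_ne_zero m hx) (t := m * (j - i))
        (k' := fun a ↦ k (a + j)) (Nat.mul_pos hm (Nat.sub_pos_of_lt hij)) hb hi ?_
      simpa only [← mul_add, add_assoc, Nat.add_sub_cancel' hij.le] using hj
    simpa only [J, dif_pos h] using h.choose_spec.2
  obtain ⟨q, hq⟩ := hJν
  obtain ⟨c, hc⟩ := exists_pow_eq_zpow_of_pow_eq_zpow hD (pow_ne_zero m hx) hi hq
  obtain ⟨r, hr⟩ := Finset.dvd_prod_of_mem J hν
  exact ⟨c * r, by rw [hr, ← mul_assoc, pow_mul, pow_mul, hc, zpow_mul, zpow_natCast]⟩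

theorem eventually_eq_of_tendsto_of_pow_eq {N : ℕ} (hN : 0 < N) {ι : Type*} {F : Filter ι}
    {z : ι → Ω} {y : Ω} (hz : Tendsto z F (𝓝 y)) (h : ∀ᶠ b in F, z b ^ N = y ^ N) :
    ∀ᶠ b in F, z b = y := by
  classical
  let R : Finset Ω := (Polynomial.nthRoots N (y ^ N)).toFinset.erase y
  have hR : (R : Set Ω)ᶜ ∈ 𝓝 y := R.finite_toSet.isClosed.isOpen_compl.mem_nhds (by simp [R])
  filter_upwards [hz.eventually hR, h] with b hbR hb
  by_contra hne
  exact hbR (by simp [R, hne, hb, Polynomial.mem_nthRoots hN])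

theorem eventually_eq_of_tendsto_of_pow_eq_zpow (hD : 1 < ‖D‖) {N : ℕ} (hN : 0 < N) {ι : Type*}
    {F : Filter ι} [F.NeBot] {z : ι → Ω} {y : Ω} (hy : y ≠ 0) (hz : Tendsto z F (𝓝 y))
    (h : ∀ b, z b ≠ 0 → ∃ c : ℤ, z b ^ N = D ^ c) : ∀ᶠ b in F, z b = y := by
  choose! c hc using h
  have hne : ∀ᶠ b in F, z b ≠ 0 := hz.eventually_ne hy
  obtain ⟨q, hq, hcq⟩ := eventually_eq_of_tendsto_zpow hD (pow_ne_zero N hy)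
    ((hz.pow N).congr' (hne.mono hc))
  refine eventually_eq_of_tendsto_of_pow_eq hN hz ?_
  filter_upwards [hne, hcq] with b hb hbq
  rw [hc b hb, hbq, hq]

end FinitePowerCover

/-! ### Proximal elements -/

section Proximal

open Filter Topology Matrix

theorem apply_one_eq_zero_of_forall_pow {K E : Type*} [Field K] [Ring E] [Algebra K E]
    [FiniteDimensional K E] {A : E} (hA : IsUnit A) (ℓ : E →ₗ[K] K) {b₀ : ℕ}
    (h : ∀ b ≥ b₀, ℓ (A ^ b) = 0) : ℓ 1 = 0 := by
  let W := Submodule.span K {B | ∃ b ≥ b₀, B = A ^ b}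
  have hinj : Function.Injective (LinearMap.mulLeft K (A ^ b₀)) := (hA.pow b₀).mul_right_injective
  have hmap : W.map (LinearMap.mulLeft K (A ^ b₀)) = W := by
    refine Submodule.eq_of_le_of_finrank_eq ?_
      (LinearEquiv.finrank_eq (Submodule.equivMapOfInjective _ hinj W)).symm
    rw [Submodule.map_span_le]
    rintro _ ⟨b, hb, rfl⟩
    exact Submodule.subset_span ⟨b₀ + b, by omega, (pow_add A b₀ b).symm⟩
  obtain ⟨w, hw, hw1⟩ : A ^ b₀ ∈ W.map (LinearMap.mulLeft K (A ^ b₀)) :=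
    hmap.symm ▸ Submodule.subset_span ⟨b₀, le_rfl, rfl⟩
  obtain rfl : w = 1 := hinj (by simpa using hw1)
  have hker : W ≤ LinearMap.ker ℓ := by
    rw [Submodule.span_le]
    rintro _ ⟨b, hb, rfl⟩
    exact h b hb
  exact hker hw

theorem exists_finset_forall_apply_eq_zero {K V ι : Type*} [Field K] [AddCommGroup V] [Module K V]
    [FiniteDimensional K V] (v : ι → V) : ∃ T : Finset ι, ∀ ℓ : V →ₗ[K] K,
      (∀ i ∈ T, ℓ (v i) = 0) → ∀ i, ℓ (v i) = 0 := by
  classical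
  obtain ⟨s, hs, hspan⟩ := (Submodule.fg_span_iff_fg_span_finset_subset (Set.range v)).1
    (IsNoetherian.noetherian (Submodule.span K (Set.range v)))
  obtain ⟨T, -, rfl⟩ := Finset.subset_set_image_iff.1 (Set.image_univ (f := v) ▸ hs)
  refine ⟨T, fun ℓ hℓ i ↦ ?_⟩
  have hker : Submodule.span K (Set.range v) ≤ LinearMap.ker ℓ := by
    rw [hspan, Submodule.span_le, Finset.coe_image, Set.image_subset_iff]
    exact hℓ
  exact hker (Submodule.subset_span ⟨i, rfl⟩)

theorem exists_hom_multiplicative_int_ne_one {S A : Type*} [Group S] [Group A] {χ : S →* A} {D : A}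
    (hD : ¬ IsOfFinOrder D) (hχ : ∀ s, χ s ∈ Subgroup.zpowers D) (hχ1 : χ ≠ 1) :
    ∃ χ' : S →* Multiplicative ℤ, χ' ≠ 1 := by
  have hinj : Function.Injective (zpowersHom A D) := injective_zpow_iff_not_isOfFinOrder.2 hD
  have hrange (s : S) : χ s ∈ (zpowersHom A D).range := hχ s
  refine ⟨(MonoidHom.ofInjective hinj).symm.toMonoidHom.comp (χ.codRestrict _ hrange), fun h ↦ ?_⟩
  refine hχ1 (MonoidHom.ext fun s ↦ ?_)
  have hs : (MonoidHom.ofInjective hinj).symm (χ.codRestrict _ hrange s) = 1 :=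
    DFunLike.congr_fun h s
  exact congrArg Subtype.val ((MulEquiv.map_eq_one_iff _).1 hs)

section Coefficient

variable {K n : Type*} [Field K] [Fintype n]

/-- The matrix coefficient `M ↦ fᵀ M e`, as a linear functional. -/
def matrixCoeff (f e : n → K) : Matrix n n K →ₗ[K] K where
  toFun M := f ⬝ᵥ (M *ᵥ e)
  map_add' M N := by rw [add_mulVec, dotProduct_add]
  map_smul' c M := by rw [smul_mulVec, dotProduct_smul, RingHom.id_apply]

theorem matrixCoeff_apply (f e : n → K) (M : Matrix n n K) :
    matrixCoeff f e M = f ⬝ᵥ (M *ᵥ e) := rfl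

theorem matrixCoeff_mul (f e : n → K) (M N : Matrix n n K) :
    matrixCoeff f e (M * N) = (f ᵥ* M) ⬝ᵥ (N *ᵥ e) := by
  rw [matrixCoeff_apply, ← mulVec_mulVec, dotProduct_mulVec]

theorem matrixCoeff_mul_vecMulVec_mul (f e : n → K) (M N : Matrix n n K) :
    matrixCoeff f e (M * vecMulVec e f * N) = matrixCoeff f e M * matrixCoeff f e N := by
  rw [mul_vecMulVec, vecMulVec_mul, matrixCoeff_apply, vecMulVec_mulVec, op_smul_eq_smul,
    dotProduct_smul, ← dotProduct_mulVec, smul_eq_mul, mul_comm, matrixCoeff_apply,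
    matrixCoeff_apply]

variable [DecidableEq n] {Γ : Type*} [Group Γ] (ρ : Γ →* Matrix n n K) {f e : n → K}

theorem matrixCoeff_inv_mul_eq_one (hfe : f ⬝ᵥ e = 1)
    (hmul : ∀ h h', matrixCoeff f e (ρ h) ≠ 0 → matrixCoeff f e (ρ h') ≠ 0 →
      matrixCoeff f e (ρ (h * h')) = matrixCoeff f e (ρ h) * matrixCoeff f e (ρ h'))
    {h : Γ} (hh : matrixCoeff f e (ρ h) ≠ 0) :
    matrixCoeff f e (ρ h⁻¹) * matrixCoeff f e (ρ h) = 1 := by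
  have hone : matrixCoeff f e 1 = 1 := by rw [matrixCoeff_apply, one_mulVec, hfe]
  have hpow (b : ℕ) : matrixCoeff f e (ρ h ^ b) = matrixCoeff f e (ρ h) ^ b := by
    induction b with
    | zero => simpa using hone
    | succ b ih =>
      rw [← map_pow] at ih ⊢
      rw [pow_succ, hmul _ _ (ih ▸ pow_ne_zero b hh) hh, ih, pow_succ]
  let ℓ : Matrix n n K →ₗ[K] K := matrixCoeff f e (ρ h) • matrixCoeff f e ∘ₗ
    LinearMap.mulRight K (ρ h⁻¹) - matrixCoeff f e
  have hℓ : ℓ 1 = 0 := by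
    refine apply_one_eq_zero_of_forall_pow ((Group.isUnit h).map ρ) ℓ (b₀ := 1) fun b hb ↦ ?_
    obtain ⟨b, rfl⟩ := Nat.exists_eq_add_of_le' hb
    have : ρ h ^ (b + 1) * ρ h⁻¹ = ρ h ^ b := by
      rw [pow_succ, mul_assoc, ← map_mul, mul_inv_cancel, map_one, mul_one]
    simp only [ℓ, LinearMap.sub_apply, LinearMap.smul_apply, LinearMap.comp_apply,
      LinearMap.mulRight_apply, this, hpow, smul_eq_mul]
    rw [pow_succ', sub_self]
  simpa [ℓ, hone, sub_eq_zero, mul_comm] using hℓ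

theorem exists_finiteIndex_hom_eq_matrixCoeff (hfe : f ⬝ᵥ e = 1)
    (hmul : ∀ h h', matrixCoeff f e (ρ h) ≠ 0 → matrixCoeff f e (ρ h') ≠ 0 →
      matrixCoeff f e (ρ (h * h')) = matrixCoeff f e (ρ h) * matrixCoeff f e (ρ h')) :
    ∃ S : Subgroup Γ, S.FiniteIndex ∧ (∀ h, h ∈ S ↔ matrixCoeff f e (ρ h) ≠ 0) ∧
      ∃ χ : S →* Kˣ, ∀ s : S, (χ s : K) = matrixCoeff f e (ρ s) := by
  have hone : matrixCoeff f e (ρ 1) = 1 := by rw [map_one, matrixCoeff_apply, one_mulVec, hfe]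
  let S : Subgroup Γ :=
    { carrier := {h | matrixCoeff f e (ρ h) ≠ 0}
      one_mem' := hone.trans_ne one_ne_zero
      mul_mem' := fun {a b} ha hb ↦ by
        simpa only [Set.mem_ofPred_eq, hmul a b ha hb] using mul_ne_zero ha hb
      inv_mem' := fun ha ↦ left_ne_zero_of_mul_eq_one (matrixCoeff_inv_mul_eq_one ρ hfe hmul ha) }
  let χ : S →* K :=
    { toFun := fun s ↦ matrixCoeff f e (ρ s)
      map_one' := hone
      map_mul' := fun s t ↦ hmul s t s.2 t.2 }
  refine ⟨S, ?_, fun h ↦ Iff.rfl, χ.toHomUnits, fun s ↦ rfl⟩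
  obtain ⟨T, hT⟩ := exists_finset_forall_apply_eq_zero (K := K) ρ
  have hsurj : Function.Surjective fun u : T ↦ (QuotientGroup.mk (u : Γ)⁻¹ : Γ ⧸ S) := by
    intro q
    obtain ⟨h, rfl⟩ := QuotientGroup.mk_surjective q
    obtain ⟨u, hu, huh⟩ : ∃ u ∈ T, matrixCoeff f e (ρ u * ρ h) ≠ 0 := by
      by_contra! hzero
      have := hT (matrixCoeff f e ∘ₗ LinearMap.mulRight K (ρ h)) hzero h⁻¹
      rw [LinearMap.comp_apply, LinearMap.mulRight_apply, ← map_mul, inv_mul_cancel, hone] at this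
      exact one_ne_zero this
    refine ⟨⟨u, hu⟩, QuotientGroup.eq.2 ?_⟩
    rw [inv_inv]
    rwa [← map_mul] at huh
  have := Finite.of_surjective _ hsurj
  exact Subgroup.finiteIndex_of_finite_quotient

end Coefficient

variable {Ω n : Type*} [NormedField Ω] [Fintype n] [DecidableEq n]

theorem exists_mem_spectrum_norm_sub_pow_le [IsAlgClosed Ω] [Nonempty n] (B : Matrix n n Ω)
    (x : Ω) : ∃ θ ∈ spectrum Ω B, ‖x - θ‖ ^ Fintype.card n ≤ ‖(scalar n x - B).det‖ := by
  classical
  have hsplits : B.charpoly.Splits := IsAlgClosed.splits _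
  have hcard : Multiset.card B.charpoly.roots = Fintype.card n := by
    rw [← hsplits.natDegree_eq_card_roots, charpoly_natDegree_eq_dim]
  obtain ⟨θ, hθ, hmin⟩ := Finset.exists_min_image B.charpoly.roots.toFinset (‖x - ·‖₊) <| by
    rw [Multiset.toFinset_nonempty, ← Multiset.card_pos, hcard]
    exact Fintype.card_pos
  have hdet : ‖(scalar n x - B).det‖₊ = (B.charpoly.roots.map (‖x - ·‖₊)).prod := by
    rw [← eval_charpoly, hsplits.eval_eq_prod_roots_of_monic B.charpoly_monic,
      ← nnnormHom_apply, map_multiset_prod, Multiset.map_map]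
    rfl
  refine ⟨θ, mem_spectrum_iff_isRoot_charpoly.2
    (Polynomial.isRoot_of_mem_roots (Multiset.mem_toFinset.1 hθ)), ?_⟩
  rw [← coe_nnnorm, ← coe_nnnorm, hdet, ← NNReal.coe_pow, NNReal.coe_le_coe, ← hcard,
    ← Multiset.card_map (‖x - ·‖₊)]
  refine Multiset.pow_card_le_prod fun y hy ↦ ?_
  obtain ⟨t, ht, rfl⟩ := Multiset.mem_map.1 hy
  exact hmin t (Multiset.mem_toFinset.2 ht)

theorem exists_tendsto_mem_spectrum [IsAlgClosed Ω] {ι : Type*} {F : Filter ι}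
    {B : ι → Matrix n n Ω} {L : Matrix n n Ω} (hB : Tendsto B F (𝓝 L)) {x : Ω}
    (hx : x ∈ spectrum Ω L) :
    ∃ θ : ι → Ω, (∀ a, θ a ∈ spectrum Ω (B a)) ∧ Tendsto θ F (𝓝 x) := by
  have : Nonempty n := by
    by_contra! hn
    simp [spectrum.of_subsingleton] at hx
  choose θ hθ hle using fun a ↦ exists_mem_spectrum_norm_sub_pow_le (B a) x
  refine ⟨θ, hθ, ?_⟩
  have hdet : Tendsto (fun a ↦ ‖(scalar n x - B a).det‖) F (𝓝 0) := by
    have h0 : (scalar n x - L).det = 0 := by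
      rw [← eval_charpoly]
      exact mem_spectrum_iff_isRoot_charpoly.1 hx
    have hcont : Continuous fun M : Matrix n n Ω ↦ ‖(scalar n x - M).det‖ := by fun_prop
    simpa only [Function.comp_def, h0, norm_zero] using (hcont.tendsto L).comp hB
  have hpow := squeeze_zero (fun a ↦ by positivity) hle hdet
  rw [tendsto_iff_norm_sub_tendsto_zero]
  simpa only [norm_sub_rev x, Real.pow_rpow_inv_natCast (norm_nonneg _) Fintype.card_ne_zero,
    Real.zero_rpow (inv_ne_zero (Nat.cast_ne_zero.2 (Fintype.card_ne_zero (α := n))))]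
    using hpow.rpow_const (p := (Fintype.card n : ℝ)⁻¹) (.inr (by positivity))

/-- The matrix `g` is expanding on the line of `e` and has strictly smaller eigenvalues elsewhere,
encoded as convergence of the rescaled powers `(D⁻¹ g) ^ a` to the rank one projection `e fᵀ`. -/
structure IsProximal (g : Matrix n n Ω) (D : Ω) (e f : n → Ω) : Prop where
  one_lt_norm : 1 < ‖D‖
  dotProduct_eq_one : f ⬝ᵥ e = 1
  tendsto : Tendsto (fun a : ℕ ↦ (D⁻¹ • g) ^ a) atTop (𝓝 (vecMulVec e f))

namespace IsProximal

variable {g : Matrix n n Ω} {D : Ω} {e f : n → Ω}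

theorem ne_zero (hg : IsProximal g D e f) : D ≠ 0 := norm_pos_iff.1 (one_pos.trans hg.one_lt_norm)

theorem matrixCoeff_pow (hg : IsProximal g D e f) (a : ℕ) :
    matrixCoeff f e ((D⁻¹ • g) ^ a) = 1 := by
  have hfix : (D⁻¹ • g) *ᵥ e = e := by
    have h1 : (D⁻¹ • g) * vecMulVec e f = vecMulVec e f := by
      refine tendsto_nhds_unique (tendsto_const_nhds.mul hg.tendsto) ?_
      simpa only [pow_succ'] using (tendsto_add_atTop_iff_nat 1).2 hg.tendsto
    have h2 : vecMulVec e f *ᵥ e = e := by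
      rw [vecMulVec_mulVec, hg.dotProduct_eq_one, MulOpposite.op_one, one_smul]
    simpa only [← mulVec_mulVec, h2] using congrArg (· *ᵥ e) h1
  have hpow : (D⁻¹ • g) ^ a *ᵥ e = e := by
    induction a with
    | zero => rw [pow_zero, one_mulVec]
    | succ a ih => rw [pow_succ, ← mulVec_mulVec, hfix, ih]
  rw [matrixCoeff_apply, hpow, hg.dotProduct_eq_one]

theorem matrixCoeff_self (hg : IsProximal g D e f) : matrixCoeff f e g = D := by
  have h := hg.matrixCoeff_pow 1
  rwa [pow_one, map_smul, smul_eq_mul, inv_mul_eq_one₀ hg.ne_zero, eq_comm] at h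

theorem matrixCoeff_mem_spectrum (hfe : f ⬝ᵥ e = 1) (h : Matrix n n Ω) :
    matrixCoeff f e h ∈ spectrum Ω (vecMulVec e f * h) := by
  rw [← Matrix.spectrum_toLin']
  refine Module.End.HasEigenvalue.mem_spectrum (Module.End.hasEigenvalue_of_hasEigenvector (x := e)
    ⟨Module.End.mem_eigenspace_iff.2 ?_, fun he ↦ ?_⟩)
  · rw [toLin'_apply, ← mulVec_mulVec, vecMulVec_mulVec, op_smul_eq_smul, matrixCoeff_apply]
  · simp [he] at hfe

theorem exists_tendsto_mem_spectrum [IsAlgClosed Ω] (hg : IsProximal g D e f)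
    (h : Matrix n n Ω) : ∃ θ : ℕ → Ω, (∀ a, θ a ∈ spectrum Ω (g ^ a * h)) ∧
      Tendsto (fun a ↦ (D ^ a)⁻¹ * θ a) atTop (𝓝 (matrixCoeff f e h)) := by
  obtain ⟨η, hη, hlim⟩ := _root_.exists_tendsto_mem_spectrum (hg.tendsto.mul_const h)
    (matrixCoeff_mem_spectrum hg.dotProduct_eq_one h)
  refine ⟨fun a ↦ D ^ a * η a, fun a ↦ ?_, hlim.congr fun a ↦ ?_⟩
  · have : g ^ a * h = Units.mk0 (D ^ a) (pow_ne_zero a hg.ne_zero) • ((D⁻¹ • g) ^ a * h) := by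
      rw [_root_.smul_pow, smul_mul_assoc, Units.smul_mk0, smul_smul, inv_pow,
        mul_inv_cancel₀ (pow_ne_zero a hg.ne_zero), one_smul]
    rw [this, spectrum.unit_smul_eq_smul]
    exact Set.smul_mem_smul_set (hη a)
  · rw [inv_mul_cancel_left₀ (pow_ne_zero a hg.ne_zero)]

variable {Γ : Type*} [Group Γ] {ρ : Γ →* Matrix n n Ω} {γ : Γ}

theorem exists_matrixCoeff_pow_eq_zpow [IsAlgClosed Ω] (hg : IsProximal (ρ γ) D e f)
    (hS : IsFinitelyPowerCovered (⋃ u, spectrum Ω (ρ u))) :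
    ∃ N : ℕ, 0 < N ∧ ∀ h, matrixCoeff f e (ρ h) ≠ 0 →
      ∃ c : ℤ, matrixCoeff f e (ρ h) ^ N = D ^ c := by
  obtain ⟨N, hN, h⟩ := hS.exists_pow_eq_zpow hg.one_lt_norm
  refine ⟨N, hN, fun u hu ↦ ?_⟩
  obtain ⟨θ, hθ, hlim⟩ := hg.exists_tendsto_mem_spectrum (ρ u)
  refine h θ _ (fun a ↦ Set.mem_iUnion.2 ⟨γ ^ a * u, ?_⟩) hu hlim
  simpa only [map_mul, map_pow] using hθ a

/-- The rescaled coefficients of `h * γ ^ b * h'` converge to the product of those of `h` and `h'`.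
Up to the exponent `N` all of them are powers of `D`, so they agree with the product for large
`b`, and hence for `b = 0`. -/
theorem matrixCoeff_mul (hg : IsProximal (ρ γ) D e f) {N : ℕ} (hN : 0 < N)
    (hpow : ∀ h, matrixCoeff f e (ρ h) ≠ 0 → ∃ c : ℤ, matrixCoeff f e (ρ h) ^ N = D ^ c)
    {h h' : Γ} (hh : matrixCoeff f e (ρ h) ≠ 0) (hh' : matrixCoeff f e (ρ h') ≠ 0) :
    matrixCoeff f e (ρ (h * h')) = matrixCoeff f e (ρ h) * matrixCoeff f e (ρ h') := by
  obtain ⟨y, hy⟩ : ∃ y, y = matrixCoeff f e (ρ h) * matrixCoeff f e (ρ h') := ⟨_, rfl⟩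
  have hlim : Tendsto (fun b : ℕ ↦ matrixCoeff f e (ρ h * (D⁻¹ • ρ γ) ^ b * ρ h')) atTop (𝓝 y) := by
    rw [hy, ← matrixCoeff_mul_vecMulVec_mul]
    have hcont : Continuous fun M ↦ f ⬝ᵥ ((ρ h * M * ρ h') *ᵥ e) := by fun_prop
    exact (hcont.tendsto _).comp hg.tendsto
  have hzpow (b : ℕ) (hb : matrixCoeff f e (ρ h * (D⁻¹ • ρ γ) ^ b * ρ h') ≠ 0) :
      ∃ c : ℤ, matrixCoeff f e (ρ h * (D⁻¹ • ρ γ) ^ b * ρ h') ^ N = D ^ c := by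
    have hscale : matrixCoeff f e (ρ h * (D⁻¹ • ρ γ) ^ b * ρ h') =
        (D ^ b)⁻¹ * matrixCoeff f e (ρ (h * γ ^ b * h')) := by
      rw [_root_.smul_pow, mul_smul_comm, smul_mul_assoc, map_smul, smul_eq_mul, inv_pow,
        ρ.map_mul, ρ.map_mul, ρ.map_pow]
    rw [hscale] at hb ⊢
    obtain ⟨c, hc⟩ := hpow _ (right_ne_zero_of_mul hb)
    refine ⟨c - (b * N : ℕ), ?_⟩
    rw [mul_pow, hc, zpow_sub₀ hg.ne_zero, zpow_natCast, inv_pow, ← pow_mul, div_eq_inv_mul]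
  obtain ⟨b₀, hb₀⟩ := eventually_atTop.1
    (eventually_eq_of_tendsto_of_pow_eq_zpow hg.one_lt_norm hN (hy ▸ mul_ne_zero hh hh') hlim hzpow)
  let ℓ : Matrix n n Ω →ₗ[Ω] Ω := matrixCoeff f e ∘ₗ LinearMap.mulRight Ω (ρ h') ∘ₗ
    LinearMap.mulLeft Ω (ρ h) - y • matrixCoeff f e
  have hunit : IsUnit (D⁻¹ • ρ γ) :=
    ((Group.isUnit γ).map ρ).smul (Units.mk0 D⁻¹ (inv_ne_zero hg.ne_zero))
  have hℓ : ℓ 1 = 0 := apply_one_eq_zero_of_forall_pow hunit ℓ (b₀ := b₀) fun b hb ↦ by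
    simp [ℓ, hb₀ b hb, hg.matrixCoeff_pow b]
  simpa [ℓ, matrixCoeff_apply f e 1, hg.dotProduct_eq_one, sub_eq_zero, hy] using hℓ

theorem virtuallyIndicable [IsAlgClosed Ω] (hg : IsProximal (ρ γ) D e f)
    (hS : IsFinitelyPowerCovered (⋃ u, spectrum Ω (ρ u))) : VirtuallyIndicable Γ := by
  obtain ⟨N, hN, hpow⟩ := hg.exists_matrixCoeff_pow_eq_zpow hS
  obtain ⟨S, hfin, hmem, χ, hχ⟩ := exists_finiteIndex_hom_eq_matrixCoeff ρ hg.dotProduct_eq_one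
    fun h h' ↦ hg.matrixCoeff_mul hN hpow
  let δ : Ωˣ := Units.mk0 D hg.ne_zero
  have hδ : ¬ IsOfFinOrder δ := fun h ↦ hg.one_lt_norm.ne'
    (MonoidHom.isOfFinOrder (Units.coeHom Ω) h).norm_eq_one
  let σ : S := ⟨γ, (hmem γ).2 (hg.matrixCoeff_self.trans_ne hg.ne_zero)⟩
  have hσ : χ σ = δ := Units.ext ((hχ σ).trans hg.matrixCoeff_self)
  refine ⟨S, hfin, exists_hom_multiplicative_int_ne_one (χ := (powMonoidHom N).comp χ) hδ
    (fun s ↦ ?_) fun h ↦ ?_⟩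
  · obtain ⟨c, hc⟩ := hpow s ((hmem s).1 s.2)
    exact ⟨c, Units.ext (by simp [δ, hχ, hc])⟩
  · exact hδ (isOfFinOrder_iff_pow_eq_one.2 ⟨N, hN, hσ ▸ DFunLike.congr_fun h σ⟩)

end IsProximal

end Proximal

/-! ### Proximality of a compound matrix -/

section CompoundMatrix

open exteriorPower Matrix Set.powersetCard

variable {R I : Type*} [CommRing R] [LinearOrder I] [Fintype I] (s : ℕ)

/-- The `s`-th compound matrix: the matrix of `⋀ˢ M` in the basis of `⋀ˢ Rᴵ` indexed by the
`s`-element subsets of `I`. Its entries are the minors of `M` of size `s`. -/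
noncomputable def compoundMatrix :
    Matrix I I R →* Matrix (Set.powersetCard I s) (Set.powersetCard I s) R where
  toFun M := LinearMap.toMatrix ((Pi.basisFun R I).exteriorPower s)
    ((Pi.basisFun R I).exteriorPower s) (exteriorPower.map s (toLin' M))
  map_one' := by rw [toLin'_one, exteriorPower.map_id, LinearMap.toMatrix_id]
  map_mul' M N := by
    rw [toLin'_mul, exteriorPower.map_comp,
      LinearMap.toMatrix_comp _ ((Pi.basisFun R I).exteriorPower s)]

theorem compoundMatrix_apply (M : Matrix I I R) (T J : Set.powersetCard I s) :
    compoundMatrix s M T J =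
      (M.submatrix (ofFinEmbEquiv.symm T) (ofFinEmbEquiv.symm J)).det := by
  rw [compoundMatrix, MonoidHom.coe_mk, OneHom.coe_mk, LinearMap.toMatrix_apply, basis_apply,
    basis_repr_apply, ιMulti_family, map_apply_ιMulti, ιMultiDual_apply_ιMulti, ← det_transpose]
  congr 1
  ext i j
  simp

theorem compoundMatrix_apply_eq_zero {s : ℕ} {M : Matrix I I R} {S T : Set.powersetCard I s}
    (hM : ∀ i ∉ S, ∀ j ∈ S, M i j = 0) (hTS : T ≠ S) : compoundMatrix s M T S = 0 := by
  obtain ⟨_, hi, hiS⟩ := (exists_mem_notMem_iff_ne T S).1 hTS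
  obtain ⟨k, rfl⟩ := (mem_range_ofFinEmbEquiv_symm_iff_mem T _).2 hi
  rw [compoundMatrix_apply]
  exact det_eq_zero_of_row_eq_zero k fun j ↦
    hM _ hiS _ ((mem_range_ofFinEmbEquiv_symm_iff_mem S _).1 ⟨j, rfl⟩)

theorem prod_ofFinEmbEquiv_symm {A I : Type*} [CommMonoid A] [LinearOrder I] {s : ℕ}
    (S : Set.powersetCard I s) (r : I → A) :
    ∏ k, r (ofFinEmbEquiv.symm S k) = ∏ i ∈ (S : Finset I), r i := by
  rw [← Finset.map_orderEmbOfFin_univ (S : Finset I) S.2, Finset.prod_map]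
  rfl

end CompoundMatrix

section Growth

open Asymptotics Filter Matrix

variable {Ω : Type*} [NormedField Ω]

theorem isBigO_det_pow {m : Type*} [Fintype m] [DecidableEq m] {M : ℕ → Matrix m m Ω} {r : m → ℝ}
    (hM : ∀ i j, (fun a ↦ M a i j) =O[atTop] (fun a ↦ r j ^ a)) :
    (fun a ↦ (M a).det) =O[atTop] fun a ↦ (∏ j, r j) ^ a := by
  simp only [det_apply, ← Finset.prod_pow]
  refine IsBigO.fun_sum fun σ _ ↦ (isBigO_of_le _ fun a ↦ ?_).trans
    (IsBigO.finsetProd fun j _ ↦ hM (σ j) j)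
  rcases Int.units_eq_one_or (Equiv.Perm.sign σ) with h | h <;> simp [h]

theorem isBigO_pow_of_sub_mul {u : ℕ → Ω} {θ : Ω} {q : ℝ} (hθ : ‖θ‖ < q)
    (hu : (fun a ↦ u (a + 1) - θ * u a) =O[atTop] fun a ↦ q ^ a) :
    u =O[atTop] fun a ↦ q ^ a := by
  have hq : 0 < q := (norm_nonneg θ).trans_lt hθ
  obtain ⟨B, -, hB⟩ := bound_of_isBigO_nat_atTop hu
  simp only [norm_pow, Real.norm_of_nonneg hq.le] at hB
  set B' := max ‖u 0‖ (B / (q - ‖θ‖))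
  have hBB' : B ≤ B' * (q - ‖θ‖) := (div_le_iff₀ (sub_pos.2 hθ)).1 (le_max_right _ _)
  refine IsBigO.of_bound B' (Eventually.of_forall fun a ↦ ?_)
  rw [norm_pow, Real.norm_of_nonneg hq.le]
  induction a with
  | zero => simp [B']
  | succ a ih =>
    calc ‖u (a + 1)‖ = ‖(u (a + 1) - θ * u a) + θ * u a‖ := by rw [sub_add_cancel]
      _ ≤ ‖u (a + 1) - θ * u a‖ + ‖θ‖ * ‖u a‖ := by
        rw [← norm_mul]; exact norm_add_le _ _
      _ ≤ B' * (q - ‖θ‖) * q ^ a + ‖θ‖ * (B' * q ^ a) := by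
        gcongr
        exact (hB (pow_ne_zero a hq.ne')).trans (by gcongr)
      _ = B' * q ^ (a + 1) := by ring

end Growth

section Dominance

open Asymptotics Filter Matrix Module Set.powersetCard Topology

variable {Ω : Type*} [NormedField Ω]

theorem isProximal_of_isLittleO {n : Type*} [Fintype n] [DecidableEq n] {M : Matrix n n Ω} {S : n}
    (hM : 1 < ‖M S S‖) (hS : ∀ T ≠ S, M T S = 0)
    (hlt : ∀ T, ∀ J ≠ S, (fun a ↦ (M ^ a) T J) =o[atTop] fun a ↦ M S S ^ a) :
    IsProximal M (M S S) (Pi.single S 1) (Pi.single S 1) where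
  one_lt_norm := hM
  dotProduct_eq_one := by simp
  tendsto := by
    have hM0 (a : ℕ) : M S S ^ a ≠ 0 := pow_ne_zero a (norm_pos_iff.1 (one_pos.trans hM))
    have hcol : M *ᵥ Pi.single S 1 = M S S • Pi.single S 1 := by
      ext T
      rcases eq_or_ne T S with rfl | hT
      · simp
      · simp [hS T hT, hT]
    have hcolpow (a : ℕ) : (M ^ a) *ᵥ Pi.single S 1 = M S S ^ a • Pi.single S 1 := by
      induction a with
      | zero => rw [pow_zero, pow_zero, one_mulVec, one_smul]
      | succ a ih => rw [pow_succ, ← mulVec_mulVec, hcol, mulVec_smul, ih, smul_smul, pow_succ']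
    refine tendsto_pi_nhds.2 fun T ↦ tendsto_pi_nhds.2 fun J ↦ ?_
    have hentry (a : ℕ) : ((M S S)⁻¹ • M) ^ a = (M S S ^ a)⁻¹ • M ^ a := by
      rw [_root_.smul_pow, inv_pow]
    simp only [hentry, Matrix.smul_apply, smul_eq_mul, ← div_eq_inv_mul]
    rcases eq_or_ne J S with rfl | hJ
    · refine tendsto_const_nhds.congr fun a ↦ ?_
      have := congrFun (hcolpow a) T
      rw [mulVec_single_one, col_apply] at this
      rw [this, Pi.smul_apply, smul_eq_mul, mul_div_cancel_left₀ _ (hM0 a)]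
      simp [vecMulVec_apply]
    · rw [vecMulVec_apply, Pi.single_eq_of_ne hJ, mul_zero]
      exact (hlt T J hJ).tendsto_div_nhds_zero

theorem isProximal_compoundMatrix {I : Type*} [LinearOrder I] [Fintype I] {A : Matrix I I Ω}
    {r : I → ℝ} (hr : ∀ i, 0 ≤ r i) (hA : ∀ i j, (fun a ↦ (A ^ a) i j) =O[atTop] fun a ↦ r j ^ a)
    {s : ℕ} {S : Set.powersetCard I s} (hS : ∀ i ∉ S, ∀ j ∈ S, A i j = 0)
    (hone : 1 < ‖compoundMatrix s A S S‖)
    (hlt : ∀ J ≠ S, ∏ i ∈ (J : Finset I), r i < ‖compoundMatrix s A S S‖) :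
    IsProximal (compoundMatrix s A) (compoundMatrix s A S S) (Pi.single S 1) (Pi.single S 1) := by
  refine isProximal_of_isLittleO hone (fun T ↦ compoundMatrix_apply_eq_zero hS) fun T J hJ ↦ ?_
  have hminor : (fun a ↦ (compoundMatrix s A ^ a) T J) =O[atTop]
      fun a ↦ (∏ i ∈ (J : Finset I), r i) ^ a := by
    simp only [← map_pow, compoundMatrix_apply, ← prod_ofFinEmbEquiv_symm]
    exact isBigO_det_pow fun i j ↦ hA _ _
  refine hminor.trans_isLittleO ?_
  rw [← isLittleO_norm_right]
  simp only [norm_pow]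
  exact isLittleO_pow_pow_of_lt_left (Finset.prod_nonneg fun i _ ↦ hr i) (hlt J hJ)

variable {V : Type*} [AddCommGroup V] [Module Ω V]

/-- The vectors whose orbit under `f` is `O(qᵃ)`, in the sense that all its coordinates are. -/
def growthSubmodule (f : End Ω V) (q : ℝ) : Submodule Ω V where
  carrier := {v | ∀ ℓ : Dual Ω V, (fun a : ℕ ↦ ℓ ((f ^ a) v)) =O[atTop] fun a ↦ q ^ a}
  zero_mem' ℓ := by simpa using isBigO_zero _ _
  add_mem' hv hw ℓ := by simpa using (hv ℓ).add (hw ℓ)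
  smul_mem' c v hv ℓ := by simpa using (hv ℓ).const_mul_left c

theorem isBigO_toMatrix_pow {I : Type*} [Fintype I] [DecidableEq I] {b : Basis I Ω V}
    {f : End Ω V} {q : ℝ} {j : I} (hj : b j ∈ growthSubmodule f q) (i : I) :
    (fun a ↦ (LinearMap.toMatrix b b f ^ a) i j) =O[atTop] fun a ↦ q ^ a := by
  simpa only [LinearMap.toMatrix_pow, LinearMap.toMatrix_apply, Basis.coord_apply] using
    hj (b.coord i)

theorem maxGenEigenspace_le_growthSubmodule (f : End Ω V) {θ : Ω} {q : ℝ} (hθ : ‖θ‖ < q) :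
    f.maxGenEigenspace θ ≤ growthSubmodule f q := by
  intro v hv
  obtain ⟨k, hk⟩ := (End.mem_maxGenEigenspace f θ v).1 hv
  clear hv
  induction k generalizing v with
  | zero =>
    obtain rfl : v = 0 := by simpa using hk
    exact zero_mem _
  | succ k ih =>
    refine fun ℓ ↦ isBigO_pow_of_sub_mul hθ ((ih (v := (f - θ • 1) v) ?_ ℓ).congr_left fun a ↦ ?_)
    · rwa [pow_succ] at hk
    · simp [pow_succ]

end Dominance

section Spectral

open Module

variable {K V : Type*} [Field K] [AddCommGroup V] [Module K V]

/-- The sum of the generalised eigenspaces of `f` whose eigenvalue lies in `s`. -/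
def spectralSubspace (f : End K V) (s : Set K) : Submodule K V :=
  ⨆ θ ∈ s, f.maxGenEigenspace θ

theorem map_mem_spectralSubspace (f : End K V) {s : Set K} {v : V}
    (hv : v ∈ spectralSubspace f s) : f v ∈ spectralSubspace f s := by
  revert v
  change spectralSubspace f s ≤ (spectralSubspace f s).comap f
  exact iSup₂_le fun θ hθ v hv ↦ Submodule.mem_iSup_of_mem θ <| Submodule.mem_iSup_of_mem hθ <|
    End.mapsTo_maxGenEigenspace_of_comm (Commute.refl f) θ hv

theorem eigenspace_le_spectralSubspace (f : End K V) {s : Set K} {θ : K} (hθ : θ ∈ s) :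
    f.eigenspace θ ≤ spectralSubspace f s :=
  End.eigenspace_le_maxGenEigenspace.trans (le_iSup₂_of_le θ hθ le_rfl)

theorem spectralSubspace_le {f : End K V} {s : Set K} {U : Submodule K V}
    (h : ∀ θ ∈ s, f.HasEigenvalue θ → f.maxGenEigenspace θ ≤ U) : spectralSubspace f s ≤ U := by
  refine iSup₂_le fun θ hθ ↦ ?_
  by_cases hf : f.HasEigenvalue θ
  · exact h θ hθ hf
  · have : f.maxGenEigenspace θ = ⊥ := by
      by_contra hbot
      exact hf (End.HasUnifEigenvalue.lt one_pos hbot)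
    exact this ▸ bot_le

variable [FiniteDimensional K V]

theorem isCompl_spectralSubspace [IsAlgClosed K] (f : End K V) (s : Set K) :
    IsCompl (spectralSubspace f s) (spectralSubspace f sᶜ) := by
  refine ⟨f.independent_maxGenEigenspace.disjoint_biSup_biSup disjoint_compl_right, ?_⟩
  rw [codisjoint_iff, ← top_le_iff, ← f.iSup_maxGenEigenspace_eq_top]
  exact (iSup_split _ (· ∈ s)).le

theorem mem_of_hasEigenvalue_restrict [IsAlgClosed K] {f : End K V} {s : Set K} {θ : K}
    (h : End.HasEigenvalue (f.restrict fun _ ↦ map_mem_spectralSubspace f (s := s)) θ) : θ ∈ s := by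
  obtain ⟨w, hw⟩ := h.exists_hasEigenvector
  by_contra hθ
  have hfw : (w : V) ∈ f.eigenspace θ :=
    End.mem_eigenspace_iff.2 (congrArg Subtype.val hw.apply_eq_smul)
  exact hw.2 (Subtype.ext ((Submodule.disjoint_def.1 (isCompl_spectralSubspace f s).disjoint) _ w.2
    (eigenspace_le_spectralSubspace f (s := sᶜ) hθ hfw)))

theorem norm_det_eq_pow_finrank {Ω V : Type*} [NormedField Ω] [IsAlgClosed Ω] [AddCommGroup V]
    [Module Ω V] [FiniteDimensional Ω V] {f : End Ω V} {R : ℝ}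
    (hR : ∀ θ, f.HasEigenvalue θ → ‖θ‖ = R) : ‖LinearMap.det f‖ = R ^ finrank Ω V := by
  have hroot : ∀ θ ∈ f.charpoly.roots, ‖θ‖ = R := fun θ hθ ↦
    hR θ ((f.hasEigenvalue_iff_isRoot_charpoly θ).2 (Polynomial.isRoot_of_mem_roots hθ))
  have hcard : Multiset.card f.charpoly.roots = finrank Ω V := by
    rw [← (IsAlgClosed.splits f.charpoly).natDegree_eq_card_roots, LinearMap.charpoly_natDegree]
  have hprod : ‖f.charpoly.roots.prod‖ = (f.charpoly.roots.map norm).prod :=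
    map_multiset_prod (normHom : Ω →*₀ ℝ) _
  rw [End.det_eq_prod_roots_charpoly_of_splits (IsAlgClosed.splits _), hprod,
    Multiset.map_congr rfl hroot, Multiset.map_const', Multiset.prod_replicate, hcard]

end Spectral

section Adapted

open Matrix Module Set.powersetCard

variable {K V : Type*} [Field K] [AddCommGroup V] [Module K V] [FiniteDimensional K V]
  {U W : Submodule K V}

/-- A basis of `V = U ⊕ W` starting with a basis of `U` and continuing with one of `W`. -/
noncomputable def adaptedBasis (h : IsCompl U W) :
    Basis (Fin (finrank K U + finrank K W)) K V :=
  (((finBasis K U).prod (finBasis K W)).map (U.prodEquivOfIsCompl W h)).reindex finSumFinEquiv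

theorem adaptedBasis_castAdd (h : IsCompl U W) (i : Fin (finrank K U)) :
    adaptedBasis h (Fin.castAdd _ i) = finBasis K U i := by
  simp [adaptedBasis]

theorem adaptedBasis_natAdd_mem (h : IsCompl U W) (i : Fin (finrank K W)) :
    adaptedBasis h (Fin.natAdd _ i) ∈ W := by
  simp [adaptedBasis]

theorem adaptedBasis_repr_castAdd (h : IsCompl U W) (u : U) (i : Fin (finrank K U)) :
    (adaptedBasis h).repr u (Fin.castAdd _ i) = (finBasis K U).repr u i := by
  simp [adaptedBasis]

theorem adaptedBasis_repr_natAdd (h : IsCompl U W) (u : U) (i : Fin (finrank K W)) :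
    (adaptedBasis h).repr u (Fin.natAdd _ i) = 0 := by
  simp [adaptedBasis]

/-- The subset `{0, …, p - 1}` of `Fin (p + q)`. -/
def initialSubset (p q : ℕ) : Set.powersetCard (Fin (p + q)) p :=
  ofFinEmbEquiv (Fin.castAddOrderEmb q)

theorem castAdd_mem_initialSubset {p : ℕ} (q : ℕ) (i : Fin p) :
    Fin.castAdd q i ∈ initialSubset p q :=
  (mem_ofFinEmbEquiv_iff_mem_range _ _).2 ⟨i, rfl⟩

theorem natAdd_notMem_initialSubset (p : ℕ) {q : ℕ} (i : Fin q) :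
    Fin.natAdd p i ∉ initialSubset p q := by
  rintro h
  obtain ⟨j, hj⟩ := (mem_ofFinEmbEquiv_iff_mem_range _ _).1 h
  have := congrArg Fin.val hj
  simp at this
  omega

variable {f : End K V} (hf : ∀ v ∈ U, f v ∈ U)
include hf

theorem toMatrix_adaptedBasis_castAdd_castAdd (h : IsCompl U W) (i j : Fin (finrank K U)) :
    LinearMap.toMatrix (adaptedBasis h) (adaptedBasis h) f (Fin.castAdd _ i) (Fin.castAdd _ j) =
      LinearMap.toMatrix (finBasis K U) (finBasis K U) (f.restrict hf) i j := by
  have hres : f (finBasis K U j) = f.restrict hf (finBasis K U j) := rfl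
  rw [LinearMap.toMatrix_apply, LinearMap.toMatrix_apply, adaptedBasis_castAdd, hres,
    adaptedBasis_repr_castAdd]

theorem toMatrix_adaptedBasis_natAdd_castAdd (h : IsCompl U W) (i : Fin (finrank K W))
    (j : Fin (finrank K U)) :
    LinearMap.toMatrix (adaptedBasis h) (adaptedBasis h) f (Fin.natAdd _ i) (Fin.castAdd _ j) =
      0 := by
  have hres : f (finBasis K U j) = f.restrict hf (finBasis K U j) := rfl
  rw [LinearMap.toMatrix_apply, adaptedBasis_castAdd, hres, adaptedBasis_repr_natAdd]

theorem toMatrix_adaptedBasis_eq_zero (h : IsCompl U W) :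
    ∀ i ∉ initialSubset (finrank K U) (finrank K W), ∀ j ∈ initialSubset _ _,
      LinearMap.toMatrix (adaptedBasis h) (adaptedBasis h) f i j = 0 := by
  intro i hi j hj
  induction i using Fin.addCases with
  | left i => exact absurd (castAdd_mem_initialSubset _ i) hi
  | right i =>
    induction j using Fin.addCases with
    | left j => exact toMatrix_adaptedBasis_natAdd_castAdd hf h i j
    | right j => exact absurd hj (natAdd_notMem_initialSubset _ j)

theorem compoundMatrix_toMatrix_adaptedBasis (h : IsCompl U W) :
    compoundMatrix _ (LinearMap.toMatrix (adaptedBasis h) (adaptedBasis h) f)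
      (initialSubset _ _) (initialSubset _ _) = LinearMap.det (f.restrict hf) := by
  rw [compoundMatrix_apply, ← LinearMap.det_toMatrix (finBasis K U), initialSubset,
    Equiv.symm_apply_apply]
  congr 1
  ext i j
  exact toMatrix_adaptedBasis_castAdd_castAdd hf h i j

end Adapted

section Dominant

open Asymptotics Filter Matrix Module Set.powersetCard Topology

variable {Ω V : Type*} [NormedField Ω] [AddCommGroup V] [Module Ω V]

theorem spectralSubspace_le_growthSubmodule {f : End Ω V} {s : Set Ω} {q : ℝ}
    (h : ∀ θ ∈ s, f.HasEigenvalue θ → ‖θ‖ < q) : spectralSubspace f s ≤ growthSubmodule f q :=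
  spectralSubspace_le fun θ hθ hf ↦ maxGenEigenspace_le_growthSubmodule f (h θ hθ hf)

/-- With `q'` and `q` as growth rates on the dominant part `S` and on its complement, every other
coordinate plane of the same dimension grows strictly slower than `S`. -/
theorem exists_gt_forall_prod_ite_lt_pow {I : Type*} [DecidableEq I] [Finite I] {s : ℕ}
    (S : Set.powersetCard I s) {q R : ℝ} (hq : 0 < q) (hqR : q < R) :
    ∃ q' > R, ∀ J : Set.powersetCard I s, J ≠ S →
      ∏ i ∈ (J : Finset I), (if i ∈ (S : Finset I) then q' else q) < R ^ s := by
  have hprod (J : Set.powersetCard I s) (hJ : J ≠ S) :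
      ∏ i ∈ (J : Finset I), (if i ∈ (S : Finset I) then R else q) < R ^ s := by
    obtain ⟨i, hi, hiS⟩ := (exists_mem_notMem_iff_ne J S).1 hJ
    calc ∏ i ∈ (J : Finset I), (if i ∈ (S : Finset I) then R else q)
      _ < ∏ _i ∈ (J : Finset I), R := by
          refine Finset.prod_lt_prod ?_ ?_ ⟨i, hi, by rwa [if_neg (by exact hiS)]⟩ <;>
            intros <;> split_ifs <;> linarith
      _ = R ^ s := by rw [Finset.prod_const, J.2]
  have hev : ∀ᶠ q' in 𝓝[>] R, ∀ J : Set.powersetCard I s, J ≠ S →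
      ∏ i ∈ (J : Finset I), (if i ∈ (S : Finset I) then q' else q) < R ^ s := by
    simp only [eventually_all]
    intro J hJ
    have hcont : Continuous fun q' ↦
        ∏ i ∈ (J : Finset I), (if i ∈ (S : Finset I) then q' else q) := by
      refine continuous_finsetProd _ fun i _ ↦ ?_
      split_ifs <;> fun_prop
    exact (hcont.continuousAt.eventually_lt_const (hprod J hJ)).filter_mono nhdsWithin_le_nhds
  obtain ⟨q', hq', hR⟩ := (hev.and self_mem_nhdsWithin).exists
  exact ⟨q', hR, hq'⟩

variable [FiniteDimensional Ω V] (f : End Ω V)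

theorem exists_norm_lt_of_hasEigenvalue {R : ℝ} (hR : 0 < R)
    (hmax : ∀ θ, f.HasEigenvalue θ → ‖θ‖ ≤ R) :
    ∃ q, 0 < q ∧ q < R ∧ ∀ θ, ‖θ‖ ≠ R → f.HasEigenvalue θ → ‖θ‖ < q := by
  have hev : ∀ᶠ q in 𝓝[<] R, ∀ θ ∈ {θ | f.HasEigenvalue θ}, ‖θ‖ ≠ R → ‖θ‖ < q := by
    refine (eventually_all_finite f.finite_hasEigenvalue).2 fun θ hθ ↦
      eventually_imp_distrib_left.2 fun hne ↦ ?_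
    filter_upwards [Ioo_mem_nhdsLT ((hmax θ hθ).lt_of_ne hne)] with q hq using hq.1
  obtain ⟨q, hq, hq0, hqR⟩ := (hev.and (Ioo_mem_nhdsLT hR)).exists
  exact ⟨q, hq0, hqR, fun θ hne hθ ↦ hq θ hθ hne⟩

/-- On the exterior power whose degree is the dimension of the sum `U` of the generalised
eigenspaces of maximal absolute value, the line `⋀ᵈ U` dominates. -/
theorem exists_isProximal_compoundMatrix [IsAlgClosed Ω] {θ₀ : Ω} (hθ₀ : f.HasEigenvalue θ₀)
    (hone : 1 < ‖θ₀‖) :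
    ∃ (N s : ℕ) (b : Basis (Fin N) Ω V) (D : Ω) (e e' : Set.powersetCard (Fin N) s → Ω),
      IsProximal (compoundMatrix s (LinearMap.toMatrix b b f)) D e e' := by
  obtain ⟨θ₁, hθ₁, hmax⟩ := Set.exists_max_image _ norm f.finite_hasEigenvalue ⟨θ₀, hθ₀⟩
  obtain ⟨R, hR⟩ : ∃ R, ‖θ₁‖ = R := ⟨_, rfl⟩
  have hR1 : 1 < R := hR ▸ hone.trans_le (hmax θ₀ hθ₀)
  obtain ⟨q, hq0, hqR, hq⟩ := exists_norm_lt_of_hasEigenvalue f (one_pos.trans hR1)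
    fun θ hθ ↦ (hmax θ hθ).trans_eq hR
  let U := spectralSubspace f {θ | ‖θ‖ = R}
  let W := spectralSubspace f {θ | ‖θ‖ = R}ᶜ
  have hU (v : V) (hv : v ∈ U) : f v ∈ U := map_mem_spectralSubspace f hv
  have hUW : IsCompl U W := isCompl_spectralSubspace f _
  have hU0 : finrank Ω U ≠ 0 := fun h ↦ hθ₁ <| le_bot_iff.1 <|
    Submodule.finrank_eq_zero.1 h ▸ eigenspace_le_spectralSubspace f hR
  let A := LinearMap.toMatrix (adaptedBasis hUW) (adaptedBasis hUW) f
  let S := initialSubset (finrank Ω U) (finrank Ω W)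
  have hnorm : ‖compoundMatrix _ A S S‖ = R ^ finrank Ω U := by
    rw [compoundMatrix_toMatrix_adaptedBasis hU hUW]
    exact norm_det_eq_pow_finrank fun θ ↦ mem_of_hasEigenvalue_restrict
  obtain ⟨q', hq', hlt⟩ := exists_gt_forall_prod_ite_lt_pow S hq0 hqR
  have hgrowth (i j) : (fun a ↦ (A ^ a) i j) =O[atTop]
      fun a ↦ (if j ∈ (S : Finset _) then q' else q) ^ a := by
    refine isBigO_toMatrix_pow ?_ i
    induction j using Fin.addCases with
    | left j =>
      rw [if_pos (by exact castAdd_mem_initialSubset _ j), adaptedBasis_castAdd]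
      exact spectralSubspace_le_growthSubmodule (fun θ hθ _ ↦ hθ.trans_lt hq') (Subtype.prop _)
    | right j =>
      rw [if_neg (by exact natAdd_notMem_initialSubset _ j)]
      exact spectralSubspace_le_growthSubmodule hq (adaptedBasis_natAdd_mem hUW j)
  refine ⟨_, _, adaptedBasis hUW, _, _, _, isProximal_compoundMatrix (fun i ↦ ?_) hgrowth
    (toMatrix_adaptedBasis_eq_zero hU hUW) (hnorm ▸ one_lt_pow₀ hR1 hU0) (hnorm ▸ hlt)⟩
  split_ifs <;> linarith

variable [IsAlgClosed Ω] {Γ n : Type*} [Group Γ] [Fintype n] [DecidableEq n]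

theorem virtuallyIndicable_of_one_lt_norm (hΓ : HasFinitePowerCover Γ) (ρ : Γ →* Matrix n n Ω)
    {γ : Γ} {θ : Ω} (hθ : θ ∈ spectrum Ω (ρ γ)) (hone : 1 < ‖θ‖) : VirtuallyIndicable Γ := by
  rw [← spectrum_toLin', ← End.hasEigenvalue_iff_mem_spectrum] at hθ
  obtain ⟨N, s, b, D, e, e', hprox⟩ := exists_isProximal_compoundMatrix _ hθ hone
  let ρ' : Γ →* Matrix (Set.powersetCard (Fin N) s) (Set.powersetCard (Fin N) s) Ω :=
    (compoundMatrix s).comp ((((toLinAlgEquiv'.trans (LinearMap.toMatrixAlgEquiv b)) :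
      Matrix n n Ω →* Matrix (Fin N) (Fin N) Ω)).comp ρ)
  exact IsProximal.virtuallyIndicable (ρ := ρ') (γ := γ) hprox
    (hΓ.isFinitelyPowerCovered_spectrum ρ')

theorem virtuallyIndicable_of_norm_ne_one (hΓ : HasFinitePowerCover Γ) (ρ : Γ →* Matrix n n Ω)
    {γ : Γ} {θ : Ω} (hθ : θ ∈ spectrum Ω (ρ γ)) (hone : ‖θ‖ ≠ 1) : VirtuallyIndicable Γ := by
  rcases hone.lt_or_gt with hlt | hgt
  · let u : (Matrix n n Ω)ˣ := ρ.toHomUnits γ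
    have hθ0 : θ ≠ 0 := spectrum.ne_zero_of_mem_of_unit (a := u) hθ
    refine virtuallyIndicable_of_one_lt_norm hΓ ρ (γ := γ⁻¹) (θ := θ⁻¹) ?_ ?_
    · exact (spectrum.inv_mem_iff (r := Units.mk0 θ hθ0) (a := u)).1 hθ
    · rw [norm_inv]
      exact (one_lt_inv₀ (norm_pos_iff.2 hθ0)).2 hlt
  · exact virtuallyIndicable_of_one_lt_norm hΓ ρ hθ hgt

end Dominant

/-! ### Eigenvalues of absolute value different from one -/

section Place

open IntermediateField IsDedekindDomain NumberField Polynomial TensorProduct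

theorem nonempty_algHom_of_finiteType (k B Ω : Type*) [Field k] [CommRing B] [Nontrivial B]
    [Algebra k B] [Algebra.FiniteType k B] [Field Ω] [IsAlgClosed Ω] [Algebra k Ω] :
    Nonempty (B →ₐ[k] Ω) := by
  obtain ⟨M, hM⟩ := Ideal.exists_maximal B
  let _ : Field (B ⧸ M) := Ideal.Quotient.field M
  have : Module.Finite k (B ⧸ M) := finite_of_finite_type_of_isJacobsonRing k (B ⧸ M)
  exact ⟨(IsAlgClosed.lift : B ⧸ M →ₐ[k] Ω).comp (Ideal.Quotient.mkₐ k M)⟩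

theorem exists_ringHom_eq_of_algebraMap_eq {A L k Ω : Type*} [CommRing A] [Algebra.FiniteType ℤ A]
    [Field L] [Algebra A L] [Field k] [Algebra k L] [Field Ω] [IsAlgClosed Ω] (ι : k →+* Ω) :
    ∃ σ : A →+* Ω, ∀ a x, algebraMap A L a = algebraMap k L x → σ a = ι x := by
  let _ : Algebra k Ω := ι.toAlgebra
  let f : k ⊗[ℤ] A →ₐ[k] L :=
    Algebra.TensorProduct.lift (Algebra.ofId k L) (algebraMap A L).toIntAlgHom fun _ _ ↦ .all _ _
  have : Algebra.FiniteType k f.range := .of_surjective f.rangeRestrict f.rangeRestrict_surjective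
  obtain ⟨τ⟩ := nonempty_algHom_of_finiteType k f.range Ω
  refine ⟨(τ.comp f.rangeRestrict).toRingHom.comp Algebra.TensorProduct.includeRight.toRingHom,
    fun a x h ↦ ?_⟩
  have hx : f.rangeRestrict (1 ⊗ₜ a) = algebraMap k f.range x := Subtype.ext <| by
    simpa [f] using h
  exact (congrArg τ hx).trans (τ.commutes x)

/-- The field is the algebraic closure of the completion of `k` at `w`. -/
theorem exists_ringHom_norm_eq.{u} {k : Type u} [Field k] {w : AbsoluteValue k ℝ}
    (hw : IsNonarchimedean w) (hnt : w.IsNontrivial) :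
    ∃ (Ω : Type u) (_ : NormedField Ω) (_ : IsAlgClosed Ω) (ι : k →+* Ω), ∀ x, ‖ι x‖ = w x := by
  let F := UniformSpace.Completion (WithAbs w)
  have : IsUltrametricDist F := by
    refine IsUltrametricDist.isUltrametricDist_of_isNonarchimedean_norm fun a b ↦ ?_
    induction a, b using UniformSpace.Completion.induction_on₂ with
    | hp => exact isClosed_le (by fun_prop) (by fun_prop)
    | ih a b =>
      rw [← UniformSpace.Completion.coe_add, UniformSpace.Completion.norm_coe,
        UniformSpace.Completion.norm_coe, UniformSpace.Completion.norm_coe]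
      exact hw _ _
  let j : k →+* F := UniformSpace.Completion.coeRingHom.comp (WithAbs.equiv w).symm.toRingHom
  have hj (x : k) : ‖j x‖ = w x := UniformSpace.Completion.norm_coe _
  obtain ⟨x, hx0, hx1⟩ := hnt
  let _ : NontriviallyNormedField F := .ofNormNeOne
    ⟨j x, (map_ne_zero j).2 hx0, by rwa [hj]⟩
  let _ : NormedField (AlgebraicClosure F) := spectralNorm.normedField F (AlgebraicClosure F)
  exact ⟨AlgebraicClosure F, inferInstance, inferInstance,
    (algebraMap F (AlgebraicClosure F)).comp j, fun x ↦
      (spectralNorm_extends (K := F) (L := AlgebraicClosure F) (j x)).trans (hj x)⟩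

theorem exists_isNonarchimedean_one_lt {R K : Type*} [CommRing R] [IsDedekindDomain R] [Field K]
    [Algebra R K] [IsFractionRing R K] {x : K} (hx : x ∉ (algebraMap R K).range) :
    ∃ w : AbsoluteValue K ℝ, IsNonarchimedean w ∧ 1 < w x := by
  obtain ⟨v, hv⟩ : ∃ v : HeightOneSpectrum R, 1 < v.valuation K x := by
    by_contra! h
    exact hx (HeightOneSpectrum.mem_integers_of_valuation_le_one K x h)
  refine ⟨v.adicAbv one_lt_two, v.isNonarchimedean_adicAbv one_lt_two, ?_⟩
  have := WithZeroMulInt.toNNReal_strictMono one_lt_two hv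
  rw [map_one] at this
  exact_mod_cast this

theorem exists_isNonarchimedean_ne_one_of_transcendental {k₀ L : Type*} [Field k₀] [Field L]
    [Algebra k₀ L] {a : L} (ha : Transcendental k₀ a) :
    ∃ w : AbsoluteValue k₀⟮a⟯ ℝ, IsNonarchimedean w ∧ w (AdjoinSimple.gen k₀ a) ≠ 1 := by
  let e : k₀⟮a⟯ ≃ₐ[k₀] RatFunc k₀ := (RatFunc.algEquivOfTranscendental a ha).symm
  have he : e (AdjoinSimple.gen k₀ a) = RatFunc.X := RatFunc.algEquivOfTranscendental_symm_gen a ha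
  let w := (idealX k₀).adicAbv (K := RatFunc k₀) one_lt_two
  have hw : w RatFunc.X < 1 := by
    rw [← RatFunc.algebraMap_X]
    exact ((idealX k₀).adicAbv_coe_lt_one_iff one_lt_two X).2 (Ideal.mem_span_singleton_self X)
  refine ⟨w.comp (f := e.toRingEquiv.toRingHom) e.injective, fun x y ↦ ?_, ?_⟩
  · change w (e (x + y)) ≤ max (w (e x)) (w (e y))
    rw [map_add]
    exact (idealX k₀).isNonarchimedean_adicAbv one_lt_two (e x) (e y)
  · change w (e (AdjoinSimple.gen k₀ a)) ≠ 1
    exact he ▸ hw.ne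

theorem isOfFinOrder_of_isAlgebraic {k₀ L : Type*} [Field k₀] [Finite k₀] [Field L] [Algebra k₀ L]
    {a : L} (ha : IsAlgebraic k₀ a) (ha0 : a ≠ 0) : IsOfFinOrder a := by
  have := adjoin.finiteDimensional ha.isIntegral
  have : Finite k₀⟮a⟯ := Module.finite_of_finite k₀
  let u : k₀⟮a⟯ˣ := Units.mk0 (AdjoinSimple.gen k₀ a) fun h ↦ ha0 <| congrArg Subtype.val h
  exact ((algebraMap k₀⟮a⟯ L : k₀⟮a⟯ →* L).comp (Units.coeHom _)).isOfFinOrder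
    (isOfFinOrder_of_finite u)

/-- A non-integral element is unbounded at a finite place; an integral one has an archimedean
absolute value different from `1` by Kronecker's theorem. -/
theorem exists_ringHom_norm_ne_one_of_numberField.{u} {k : Type u} [Field k] [NumberField k]
    {x : k} (hx0 : x ≠ 0) (hx : ¬ IsOfFinOrder x) :
    ∃ (Ω : Type u) (_ : NormedField Ω) (_ : IsAlgClosed Ω) (ι : k →+* Ω), ‖ι x‖ ≠ 1 := by
  by_cases hint : IsIntegral ℤ x
  · obtain ⟨ι, hι⟩ : ∃ ι : k →+* ℂ, ‖ι x‖ ≠ 1 := by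
      by_contra! h
      obtain ⟨N, hN, hxN⟩ := Embeddings.pow_eq_one_of_norm_eq_one k ℂ hint h
      exact hx (isOfFinOrder_iff_pow_eq_one.2 ⟨N, hN, hxN⟩)
    let _ : Algebra k ℂ := ι.toAlgebra
    let j : AlgebraicClosure k →ₐ[k] ℂ := IsAlgClosed.lift
    refine ⟨AlgebraicClosure k, .induced _ _ j j.injective, inferInstance,
      algebraMap k (AlgebraicClosure k), ?_⟩
    change ‖j (algebraMap k (AlgebraicClosure k) x)‖ ≠ 1
    rwa [j.commutes]
  · obtain ⟨w, hw, hwx⟩ := exists_isNonarchimedean_one_lt (R := 𝓞 k) (x := x) <| by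
      rintro ⟨y, rfl⟩
      exact hint y.2
    obtain ⟨Ω, _, _, ι, hι⟩ := exists_ringHom_norm_eq hw ⟨x, hx0, hwx.ne'⟩
    exact ⟨Ω, _, ‹_›, ι, hι x ▸ hwx.ne'⟩

theorem exists_subfield_ringHom_norm_ne_one.{u} {L : Type u} [Field L] {a : L} (ha0 : a ≠ 0)
    (ha : ¬ IsOfFinOrder a) : ∃ (k : Subfield L) (x : k) (Ω : Type u) (_ : NormedField Ω)
      (_ : IsAlgClosed Ω) (ι : k →+* Ω), (x : L) = a ∧ ‖ι x‖ ≠ 1 := by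
  have htrans {k₀ : Type} [Field k₀] [Algebra k₀ L] (h : Transcendental k₀ a) :
      ∃ (Ω : Type u) (_ : NormedField Ω) (_ : IsAlgClosed Ω) (ι : k₀⟮a⟯ →+* Ω),
        ‖ι (AdjoinSimple.gen k₀ a)‖ ≠ 1 := by
    obtain ⟨w, hw, hwa⟩ := exists_isNonarchimedean_ne_one_of_transcendental h
    obtain ⟨Ω, _, _, ι, hι⟩ := exists_ringHom_norm_eq hw
      ⟨_, fun h ↦ ha0 <| congrArg Subtype.val h, hwa⟩
    exact ⟨Ω, _, ‹_›, ι, hι _ ▸ hwa⟩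
  rcases CharP.exists' L with _ | ⟨p, _, _⟩
  · obtain ⟨Ω, _, _, ι, hι⟩ : ∃ (Ω : Type u) (_ : NormedField Ω) (_ : IsAlgClosed Ω)
        (ι : ℚ⟮a⟯ →+* Ω), ‖ι (AdjoinSimple.gen ℚ a)‖ ≠ 1 := by
      by_cases halg : IsAlgebraic ℚ a
      · have := adjoin.finiteDimensional halg.isIntegral
        have : NumberField ℚ⟮a⟯ := ⟨⟩
        exact exists_ringHom_norm_ne_one_of_numberField (fun h ↦ ha0 <| congrArg Subtype.val h)
          fun h ↦ ha <| (algebraMap ℚ⟮a⟯ L : ℚ⟮a⟯ →* L).isOfFinOrder h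
      · exact htrans halg
    exact ⟨ℚ⟮a⟯.toSubfield, AdjoinSimple.gen ℚ a, Ω, _, ‹_›, ι, rfl, hι⟩
  · let _ : Algebra (ZMod p) L := ZMod.algebra L p
    obtain ⟨Ω, _, _, ι, hι⟩ := htrans (k₀ := ZMod p)
      fun h ↦ ha (isOfFinOrder_of_isAlgebraic h ha0)
    exact ⟨(ZMod p)⟮a⟯.toSubfield, AdjoinSimple.gen (ZMod p) a, Ω, _, ‹_›, ι, rfl, hι⟩

theorem exists_ringHom_norm_ne_one.{u} {A : Type u} [CommRing A] [IsDomain A]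
    [Algebra.FiniteType ℤ A] {a : A} (ha0 : a ≠ 0) (ha : ¬ IsOfFinOrder a) :
    ∃ (Ω : Type u) (_ : NormedField Ω) (_ : IsAlgClosed Ω) (σ : A →+* Ω), ‖σ a‖ ≠ 1 := by
  have hinj := IsFractionRing.injective A (FractionRing A)
  obtain ⟨k, x, Ω, _, _, ι, hx, hι⟩ := exists_subfield_ringHom_norm_ne_one
    ((map_ne_zero_iff _ hinj).2 ha0)
    (mt (Function.Injective.isOfFinOrder_iff (f := (algebraMap A (FractionRing A)).toMonoidHom)
      hinj).1 ha)
  obtain ⟨σ, hσ⟩ := exists_ringHom_eq_of_algebraMap_eq (A := A) (L := FractionRing A) ι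
  exact ⟨Ω, _, ‹_›, σ, hσ a x hx.symm ▸ hι⟩

end Place

/-! ### Linear groups -/

section FinitenessOrIndicability

open Polynomial

variable {Γ K n : Type*} [Group Γ]

theorem finite_setOf_isOfFinOrder_inter_powers {M : Type*} [Monoid M] (μ : M) :
    ({x | IsOfFinOrder x} ∩ (Submonoid.powers μ : Set M)).Finite := by
  by_cases hμ : IsOfFinOrder μ
  · exact hμ.finite_powers.inter_of_right _
  · refine (Set.finite_singleton 1).subset ?_
    rintro _ ⟨hk, k, rfl⟩
    rw [(isOfFinOrder_pow.1 hk).resolve_left hμ]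
    exact pow_zero μ

theorem IsFinitelyPowerCovered.finite [CommRing K] [IsDomain K] {S : Set K}
    (hS : IsFinitelyPowerCovered S) (htor : ∀ θ ∈ S, IsOfFinOrder θ) : S.Finite := by
  obtain ⟨m, hm, 𝓜, hcov⟩ := hS
  have hfin := 𝓜.finite_toSet.biUnion fun μ _ ↦ finite_setOf_isOfFinOrder_inter_powers μ
  refine (hfin.biUnion fun x _ ↦ (nthRootsFinset m x).finite_toSet).subset fun θ hθ ↦ ?_
  obtain ⟨μ, hμ, k, hk⟩ := hcov θ hθ
  refine Set.mem_biUnion (x := θ ^ m) (Set.mem_biUnion hμ ⟨(htor θ hθ).pow, k, hk.symm⟩) ?_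
  exact (mem_nthRootsFinset hm _).2 rfl

variable [Group.FG Γ] [Fintype n] [DecidableEq n]

/-- The eigenvalue is moved to a place where its absolute value is not `1`, by specialising a
finitely generated ring over which both the representation and the eigenvalue are defined. -/
theorem virtuallyIndicable_of_not_isOfFinOrder [Field K] (hΓ : HasFinitePowerCover Γ)
    (ρ : Γ →* Matrix n n K) {γ : Γ} {θ : K} (hθ : θ ∈ spectrum K (ρ γ)) (htor : ¬ IsOfFinOrder θ) :
    VirtuallyIndicable Γ := by
  obtain ⟨A, hA, hθA, ρA, hρA⟩ := exists_fg_subalgebra_lift ρ (Set.finite_singleton θ)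
  have : Algebra.FiniteType ℤ A := A.fg_iff_finiteType.1 hA
  obtain ⟨a, rfl⟩ : ∃ a : A, (a : K) = θ := ⟨⟨θ, hθA rfl⟩, rfl⟩
  have ha0 : (a : K) ≠ 0 := spectrum.ne_zero_of_mem_of_unit (a := ρ.toHomUnits γ) hθ
  obtain ⟨Ω, _, _, σ, hσ⟩ := exists_ringHom_norm_ne_one (a := a) (fun h ↦ ha0 (by simp [h]))
    fun h ↦ htor (A.val.toMonoidHom.isOfFinOrder h)
  have hroot : (ρA γ).charpoly.IsRoot a := by
    rw [Matrix.mem_spectrum_iff_isRoot_charpoly, ← hρA, ← A.val.coe_toRingHom,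
      Matrix.charpoly_map] at hθ
    exact hθ.of_map Subtype.val_injective
  refine virtuallyIndicable_of_norm_ne_one hΓ (σ.mapMatrix.toMonoidHom.comp ρA) (γ := γ) ?_ hσ
  rw [Matrix.mem_spectrum_iff_isRoot_charpoly]
  change ((ρA γ).map σ).charpoly.IsRoot (σ a)
  rw [Matrix.charpoly_map]
  exact hroot.map

theorem finite_or_virtuallyIndicable [Field K] [IsAlgClosed K] (hΓ : HasFinitePowerCover Γ)
    {ρ : Γ →* Matrix n n K} (hρ : Function.Injective ρ) : Finite Γ ∨ VirtuallyIndicable Γ := by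
  refine or_iff_not_imp_right.2 fun hind ↦ ?_
  have hspec : (⋃ γ, spectrum K (ρ γ)).Finite := by
    refine (hΓ.isFinitelyPowerCovered_spectrum ρ).finite fun θ hθ ↦ ?_
    obtain ⟨γ, hγ⟩ := Set.mem_iUnion.1 hθ
    exact by_contra fun htor ↦ hind (virtuallyIndicable_of_not_isOfFinOrder hΓ ρ hγ htor)
  let ρ' : Representation K Γ (n → K) := 
    (Matrix.toLinAlgEquiv' : Matrix n n K ≃ₐ[K] Module.End K (n → K)).toMonoidHom.comp ρ
  have hρ' : Function.Injective ρ' := Matrix.toLinAlgEquiv'.injective.comp hρ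
  have hker : ρ'.ker.FiniteIndex := finiteIndex_ker_of_finite_spectrum hind ρ' <| by
    have (γ : Γ) : spectrum K (ρ' γ) = spectrum K (ρ γ) := Matrix.spectrum_toLin' (ρ γ)
    simpa only [this] using hspec
  rw [(MonoidHom.ker_eq_bot_iff _).2 hρ'] at hker
  exact Nat.finite_of_card_ne_zero (Subgroup.index_bot (G := Γ) ▸ hker.index_ne_zero)

theorem VirtuallyCyclic.of_linear [Field K] [IsAlgClosed K] (hΓ : bVCyc Γ) {ρ : Γ →* Matrix n n K}
    (hρ : Function.Injective ρ) : VirtuallyCyclic Γ := by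
  obtain _ | ⟨H, _, χ, hχ⟩ := finite_or_virtuallyIndicable hΓ.hasFinitePowerCover hρ
  · exact .of_finite
  · have : Group.ResiduallyFinite H :=
      residuallyFinite_of_injective (ρ := ρ.comp H.subtype) (hρ.comp Subtype.val_injective)
    exact .of_finiteIndex (.of_bVCyc_of_residuallyFinite (hΓ.subgroup H) hχ)

end FinitenessOrIndicability

theorem stmt_1_general {G : Type*} [Group G] (hfg : Group.FG G) (h : bVCyc G) {R : Type*}
    [CommRing R] [IsDomain R] {n : Type*} [Fintype n] [DecidableEq n] (φ : G →* GL n R) :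
    VirtuallyCyclic φ.range := by
  let i : R →+* AlgebraicClosure (FractionRing R) :=
    (algebraMap (FractionRing R) _).comp (algebraMap R _)
  have hi : Function.Injective i :=
    (algebraMap (FractionRing R) _).injective.comp (IsFractionRing.injective R _)
  let ρ : φ.range →* Matrix n n (AlgebraicClosure (FractionRing R)) :=
    (i.mapMatrix.toMonoidHom.comp (Units.coeHom _)).comp φ.range.subtype
  have hρ : Function.Injective ρ :=
    (Matrix.map_injective hi).comp (Units.val_injective.comp Subtype.val_injective)
  exact .of_linear (h.of_surjective φ.rangeRestrict_surjective) hρ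

/-- If a finitely generated group with BVC surjects onto a linear group, then
the image is virtually cyclic. -/
theorem stmt_1 {G : Type*} [Group G] (hfg : Group.FG G) (hbvc : BVC G)
    {K : Type*} [Field K] (d : ℕ) (φ : G →* GL (Fin d) K) :
    VirtuallyCyclic φ.range :=
  stmt_1_general hfg hbvc.bVCyc φ
end

section
/- Let G be a group with bCyc and let K ≤ G be a subgroup of finite index. Then K has bCyc; that is, there are finitely many elements k_1, …, k_m ∈ K such that every element of K is conjugate inside K to a power k_i^j (j ∈ ℤ) of some k_i. -/
section

open scoped Pointwise

variable {G : Type*} [Group G]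

lemma exists_zpowers_eq_subgroupOf (H K : Subgroup G) [IsCyclic H] :
    ∃ c : K, Subgroup.zpowers c = H.subgroupOf K := by
  have : IsCyclic (H.subgroupOf K) := by
    refine isCyclic_of_injective (K.subtype.subgroupComap H) fun x y hxy => ?_
    exact Subtype.ext (Subtype.ext (congrArg (fun h : H => (h : G)) hxy))
  exact (Subgroup.isCyclic_iff_exists_zpowers_eq_top _).mp this

lemma exists_isConj_coe_eq_conj_of_mul_eq_univ {K : Subgroup G} {T : Set G}
    (hT : (K : Set G) * T = Set.univ) {k : K} {g : G} (hkg : IsConj (k : G) g) :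
    ∃ t ∈ T, ∃ k' : K, IsConj k k' ∧ (k' : G) = t * g * t⁻¹ := by
  obtain ⟨x, hx⟩ := isConj_iff.mp hkg.symm
  obtain ⟨h, hh, t, ht, rfl⟩ := Set.mem_mul.mp (hT ▸ Set.mem_univ x)
  lift h to K using hh
  refine ⟨t, ht, h⁻¹ * k * h⁻¹⁻¹, isConj_iff.mpr ⟨h⁻¹, rfl⟩, ?_⟩
  simp only [Subgroup.coe_mul, Subgroup.coe_inv, ← hx]
  group

end

/-- bCyc passes to finite index subgroups. -/
theorem stmt_4 {G : Type*} [Group G] (hG : bCyc G) (K : Subgroup G)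
    (hK : K.FiniteIndex) : bCyc K := by
  classical
  obtain ⟨s, hs⟩ := hG
  obtain ⟨T, hT, -⟩ := K.exists_isComplement_right 1
  choose c hc using fun b : G => exists_zpowers_eq_subgroupOf (Subgroup.zpowers b) K
  refine ⟨Finset.image₂ (fun t a => c (t * a * t⁻¹)) hT.finite_right.toFinset s, fun k => ?_⟩
  obtain ⟨a, ha, n, hkn⟩ := hs k
  obtain ⟨t, ht, k', hkk', hk'⟩ := exists_isConj_coe_eq_conj_of_mul_eq_univ hT.mul_eq hkn
  have hk'_mem : k' ∈ Subgroup.zpowers (c (t * a * t⁻¹)) := by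
    rw [hc, Subgroup.mem_subgroupOf, hk', ← conj_zpow]
    exact Subgroup.zpow_mem_zpowers _ n
  obtain ⟨m, rfl⟩ := Subgroup.mem_zpowers_iff.mp hk'_mem
  exact ⟨_, Finset.mem_image₂_of_mem (hT.finite_right.mem_toFinset.mpr ht) ha, m, hkk'⟩
end

section
/- Let G be a group and suppose there are finitely many subgroups H_1, …, H_n of G, each of which is Noetherian (meaning every subgroup of H_i is finitely generated), such that every element of G lies in some conjugate of some H_i. Then G satisfies the ascending chain condition on normal subgroups: for every ascending chain N_0 ≤ N_1 ≤ N_2 ≤ … of normal subgroups of G there is an index j_0 such that N_j = N_{j_0} for all j ≥ j_0. -/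
/-! A normal subgroup `N` is determined by its traces `N ∩ H i`: every `g` is conjugate to an
element `h` of some `H i`, and `g ∈ N` iff `h ∈ N`. Hence `N ↦ (N ∩ H i)ᵢ` embeds the normal
subgroups of `G` as an ordered set into a finite product. The traces being normal in `H i`, it
suffices that each `H i` satisfies the ascending chain condition on its *normal* subgroups. -/

theorem isCompactElement_of_fg {G : Type*} [Group G] {K : Subgroup G} (hK : K.FG) :
    IsCompactElement K := by
  obtain ⟨S, rfl⟩ := hK
  rw [CompleteLattice.isCompactElement_iff_le_of_directed_sSup_le]
  intro s hne hdir hle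
  have hS : (S : Set G) ⊆ ⋃ L ∈ s, (L : Set G) := fun g hg ↦
    have ⟨_, hL, hgL⟩ := (Subgroup.mem_sSup_of_directedOn hne hdir).mp
      (hle (Subgroup.subset_closure hg))
    Set.mem_biUnion hL hgL
  obtain ⟨L, hL, hSL⟩ := DirectedOn.exists_mem_subset_of_finset_subset_biUnion hne hdir hS
  exact ⟨L, hL, (Subgroup.closure_le L).mpr hSL⟩

theorem wellFoundedGT_subgroup_of_forall_fg {G : Type*} [Group G] (hG : ∀ K : Subgroup G, K.FG) :
    WellFoundedGT (Subgroup G) := by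
  rw [CompleteLattice.wellFoundedGT_iff_isSupFiniteCompact,
    CompleteLattice.isSupFiniteCompact_iff_all_elements_compact]
  exact fun K ↦ isCompactElement_of_fg (hG K)

theorem wellFoundedGT_pi {ι : Type*} [Finite ι] {α : ι → Type*} [∀ i, Preorder (α i)]
    [∀ i, WellFoundedGT (α i)] : WellFoundedGT (∀ i, α i) :=
  ⟨(Pi.wellFoundedLT (α := fun i ↦ (α i)ᵒᵈ)).wf⟩

section ConjugateCover

variable {G ι : Type*} [Group G] {H : ι → Subgroup G}

theorem le_iff_forall_subgroupOf_le_of_conj_cover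
    (hcover : ∀ g : G, ∃ i, ∃ x : G, x * g * x⁻¹ ∈ H i)
    {M N : Subgroup G} (hM : M.Normal) (hN : N.Normal) :
    M ≤ N ↔ ∀ i, M.subgroupOf (H i) ≤ N.subgroupOf (H i) := by
  refine ⟨fun h i ↦ Subgroup.comap_mono h, fun h g hg ↦ ?_⟩
  obtain ⟨i, x, hx⟩ := hcover g
  have hconj : x * g * x⁻¹ ∈ N := @h i ⟨x * g * x⁻¹, hx⟩ (hM.conj_mem g hg x)
  simpa only [mul_assoc, inv_mul_cancel_left, inv_mul_cancel, mul_one] using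
    hN.conj_mem' _ hconj x

theorem wellFoundedGT_normal_of_conj_cover [Finite ι]
    [∀ i, WellFoundedGT {K : Subgroup (H i) // K.Normal}]
    (hcover : ∀ g : G, ∃ i, ∃ x : G, x * g * x⁻¹ ∈ H i) :
    WellFoundedGT {N : Subgroup G // N.Normal} :=
  let trace (N : {N : Subgroup G // N.Normal}) (i : ι) : {K : Subgroup (H i) // K.Normal} :=
    ⟨N.1.subgroupOf (H i), N.2.subgroupOf (H i)⟩
  have trace_le_iff {M N} : trace M ≤ trace N ↔ M ≤ N :=
    (le_iff_forall_subgroupOf_le_of_conj_cover hcover M.2 N.2).symm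
  have := wellFoundedGT_pi (α := fun i ↦ {K : Subgroup (H i) // K.Normal})
  (OrderEmbedding.ofMapLEIff trace fun _ _ ↦ trace_le_iff).wellFoundedGT

theorem stmt_5_general [Finite ι] [∀ i, WellFoundedGT {K : Subgroup (H i) // K.Normal}]
    (hcover : ∀ g : G, ∃ i, ∃ x : G, x * g * x⁻¹ ∈ H i)
    (N : ℕ → Subgroup G) (hnorm : ∀ j, (N j).Normal) (hmono : Monotone N) :
    ∃ j₀ : ℕ, ∀ j ≥ j₀, N j = N j₀ := by
  have := wellFoundedGT_normal_of_conj_cover hcover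
  obtain ⟨j₀, hj₀⟩ := WellFoundedGT.monotone_chain_condition
    (⟨fun j ↦ ⟨N j, hnorm j⟩, hmono⟩ : ℕ →o {N : Subgroup G // N.Normal})
  exact ⟨j₀, fun j hj ↦ congrArg Subtype.val (hj₀ j hj).symm⟩

end ConjugateCover

/-- If a group is covered by conjugates of finitely many Noetherian subgroups, then it
satisfies the ascending chain condition on normal subgroups. -/
theorem stmt_5 {G : Type*} [Group G] (n : ℕ) (H : Fin n → Subgroup G)
    (hNoeth : ∀ i, ∀ K : Subgroup (H i), K.FG)
    (hcover : ∀ g : G, ∃ i, ∃ x : G, x * g * x⁻¹ ∈ H i)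
    (N : ℕ → Subgroup G) (hnorm : ∀ j, (N j).Normal) (hmono : Monotone N) :
    ∃ j₀ : ℕ, ∀ j ≥ j₀, N j = N j₀ := by
  have : ∀ i, WellFoundedGT (Subgroup (H i)) := fun i ↦
    wellFoundedGT_subgroup_of_forall_fg (hNoeth i)
  exact stmt_5_general hcover N hnorm hmono
end

section
/- Let F be a finite group, let φ : ℤ → Aut(F) be an action of the integers on F by automorphisms, and suppose that the semidirect product V = F ⋊_φ ℤ has bCyc. Then F is the trivial group. -/
/-!
Let `c` be a central element of infinite order such that every element of `G` has a nonzero power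
in `⟨c⟩`. If the powers of `g₁, …, gᵣ` meet all conjugacy classes and `gᵢ ^ mᵢ = c ^ jᵢ`, take `N`
to be the product of the nonzero `jᵢ`. For `x ^ n = 1` with `n ≠ 0`, the element `x * c ^ N` is
conjugate to some `gᵢ ^ k`. Its `n`-th power `c ^ (N * n)` is central, so `gᵢ ^ (k * n)` equals
`c ^ (N * n)`, and comparing exponents of `c` gives `jᵢ * k = N * mᵢ`. Since `jᵢ ∣ N`, this forces
`gᵢ ^ k = c ^ N`. So `x * c ^ N` is conjugate to the central element `c ^ N`, and `x = 1`.

In `F ⋊ ℤ`, with `F` torsion and the generator acting with order `d`, the element `c = (1, d)`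
qualifies: `g ^ d` acts trivially on `F`, so its two components commute, and a further power kills
the one in `F`.
-/

section CentralElement

variable {G : Type*} [Group G] {c : G}

lemma zpow_eq_zpow_of_zpow_mul_eq {a : G} (hc : ¬IsOfFinOrder c) {m j N k n : ℤ} (hm : m ≠ 0)
    (ham : a ^ m = c ^ j) (hN : N ≠ 0) (hjN : j ≠ 0 → j ∣ N) (hn : n ≠ 0)
    (h : a ^ (k * n) = c ^ (N * n)) : a ^ k = c ^ N := by
  have hexp : j * k = N * m := by
    have hpow : c ^ (j * k * n) = c ^ (N * m * n) := calc
      c ^ (j * k * n) = (a ^ m) ^ (k * n) := by rw [ham, ← zpow_mul, mul_assoc]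
      _ = (a ^ (k * n)) ^ m := zpow_comm a m (k * n)
      _ = c ^ (N * m * n) := by rw [h, ← zpow_mul, mul_right_comm]
    exact mul_right_cancel₀ hn (injective_zpow_iff_not_isOfFinOrder.2 hc hpow)
  have hj : j ≠ 0 := left_ne_zero_of_mul (hexp ▸ mul_ne_zero hN hm)
  obtain ⟨q, rfl⟩ := hjN hj
  have hk : k = m * q := mul_left_cancel₀ hj (by rw [hexp]; ring)
  rw [hk, zpow_mul, ham, zpow_mul]

lemma exists_forall_zpow_eq_zpow_of_zpow_mul_eq {s : Finset G} (hc : ¬IsOfFinOrder c)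
    (hpow : ∀ a ∈ s, ∃ m : ℕ, m ≠ 0 ∧ a ^ m ∈ Subgroup.zpowers c) :
    ∃ N : ℤ, ∀ a ∈ s, ∀ k n : ℤ, n ≠ 0 → a ^ (k * n) = c ^ (N * n) → a ^ k = c ^ N := by
  choose! m hm j hj using hpow
  have hN : ∏ a ∈ s with j a ≠ 0, j a ≠ 0 :=
    Finset.prod_ne_zero_iff.2 fun a ha ↦ (Finset.mem_filter.1 ha).2
  refine ⟨∏ a ∈ s with j a ≠ 0, j a, fun a ha k n hn h ↦ ?_⟩
  have ham : a ^ (m a : ℤ) = c ^ j a := by rw [zpow_natCast]; exact (hj a ha).symm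
  exact zpow_eq_zpow_of_zpow_mul_eq hc (mod_cast hm a ha) ham hN
    (fun hja ↦ Finset.dvd_prod_of_mem j (Finset.mem_filter.2 ⟨ha, hja⟩)) hn h

theorem bCyc.eq_one_of_isOfFinOrder (hG : bCyc G) (hcenter : c ∈ Subgroup.center G)
    (hc : ¬IsOfFinOrder c) (hpow : ∀ g : G, ∃ m : ℕ, m ≠ 0 ∧ g ^ m ∈ Subgroup.zpowers c)
    {x : G} (hx : IsOfFinOrder x) : x = 1 := by
  obtain ⟨s, hs⟩ := hG
  obtain ⟨N, hN⟩ := exists_forall_zpow_eq_zpow_of_zpow_mul_eq (s := s) hc fun a _ ↦ hpow a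
  obtain ⟨n, hn, hxn⟩ := isOfFinOrder_iff_pow_eq_one.1 hx
  obtain ⟨a, ha, k, hconj⟩ := hs (x * c ^ N)
  have hcentral (i : ℤ) : c ^ i ∈ Subgroup.center G := zpow_mem hcenter i
  have hxc : (x * c ^ N) ^ n = c ^ (N * n) := by
    have hcomm : Commute x (c ^ N) := Subgroup.mem_center_iff.1 (hcentral N) x
    rw [hcomm.mul_pow, hxn, one_mul, zpow_mul, zpow_natCast]
  have hak : a ^ (k * n) = c ^ (N * n) := by
    have hconj_pow : IsConj (c ^ (N * n)) (a ^ (k * n)) := by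
      simpa only [hxc, zpow_mul, zpow_natCast] using hconj.pow n
    exact (hconj_pow.eq_of_left_mem_center (hcentral _)).symm
  rw [hN a ha k n (mod_cast hn.ne') hak] at hconj
  exact mul_eq_right.1 (hconj.eq_of_right_mem_center (hcentral N))

end CentralElement

section SemidirectProduct

open SemidirectProduct

variable {F : Type*} [Group F]

lemma inr_mem_center {N : Type*} [CommGroup N] {φ : N →* MulAut F} {n : N} (hn : φ n = 1) :
    (inr n : F ⋊[φ] N) ∈ Subgroup.center (F ⋊[φ] N) := by
  refine Subgroup.mem_center_iff.2 fun g ↦ ?_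
  ext
  · simp [hn]
  · simp [mul_comm]

lemma exists_pow_eq_inr {N : Type*} [Group N] {φ : N →* MulAut F} {g : F ⋊[φ] N}
    (hfin : IsOfFinOrder g.left) (hg : φ g.right = 1) :
    ∃ m : ℕ, m ≠ 0 ∧ g ^ m = inr (g.right ^ m) := by
  obtain ⟨m, hm, hleft⟩ := isOfFinOrder_iff_pow_eq_one.1 hfin
  have hcomm : Commute (inl g.left : F ⋊[φ] N) (inr g.right) := by
    ext <;> simp [hg]
  refine ⟨m, hm.ne', ?_⟩
  calc
    g ^ m = (inl g.left * inr g.right) ^ m := by rw [inl_left_mul_inr_right]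
    _ = inl (g.left ^ m) * inr (g.right ^ m) := by rw [hcomm.mul_pow, map_pow, map_pow]
    _ = inr (g.right ^ m) := by rw [hleft, map_one, one_mul]

lemma exists_pow_mem_zpowers_inr (hF : IsMulTorsion F) {N : Type*} [Group N] {φ : N →* MulAut F}
    {t : N} (ht : ∀ n, n ∈ Subgroup.zpowers t) {d : ℕ} (hd : d ≠ 0) (hφ : φ t ^ d = 1)
    (g : F ⋊[φ] N) : ∃ m : ℕ, m ≠ 0 ∧ g ^ m ∈ Subgroup.zpowers (inr (t ^ d) : F ⋊[φ] N) := by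
  obtain ⟨i, hi : t ^ i = g.right⟩ := ht g.right
  have hgd : (g ^ d).right = (t ^ d) ^ i := calc
    (g ^ d).right = g.right ^ d := map_pow rightHom g d
    _ = (t ^ d) ^ i := by rw [← hi, ← zpow_natCast, ← zpow_natCast, zpow_comm]
  have htrivial : φ (g ^ d).right = 1 := by rw [hgd, map_zpow, map_pow, hφ, one_zpow]
  obtain ⟨m, hm, hgm⟩ := exists_pow_eq_inr (hF _) htrivial
  refine ⟨d * m, mul_ne_zero hd hm, ?_⟩
  rw [pow_mul, hgm, hgd, map_pow inr _ m, map_zpow]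
  exact pow_mem (zpow_mem (Subgroup.mem_zpowers _) _) m

end SemidirectProduct

theorem stmt_6_general {F : Type*} [Group F] (hF : IsMulTorsion F)
    (φ : Multiplicative ℤ →* MulAut F) (hφ : IsOfFinOrder (φ (.ofAdd 1)))
    (h : bCyc (F ⋊[φ] Multiplicative ℤ)) (f : F) : f = 1 := by
  obtain ⟨d, hd, hφd⟩ := isOfFinOrder_iff_pow_eq_one.1 hφ
  have hgen (n : Multiplicative ℤ) : n ∈ Subgroup.zpowers (.ofAdd 1) :=
    ⟨n.toAdd, by simp [← ofAdd_zsmul]⟩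
  have hcenter := inr_mem_center (φ := φ) (n := .ofAdd 1 ^ d) (by rw [map_pow, hφd])
  have hc : ¬IsOfFinOrder (SemidirectProduct.inr (.ofAdd 1 ^ d) : F ⋊[φ] Multiplicative ℤ) := by
    rw [SemidirectProduct.inr_injective.isOfFinOrder_iff, isOfFinOrder_pow]
    simp [hd.ne', isOfFinOrder_iff_eq_one]
  have hinl : (SemidirectProduct.inl f : F ⋊[φ] Multiplicative ℤ) = 1 :=
    h.eq_one_of_isOfFinOrder hcenter hc (exists_pow_mem_zpowers_inr hF hgen hd.ne' hφd)
      (SemidirectProduct.inl.isOfFinOrder (hF f))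
  exact SemidirectProduct.inl_injective (hinl.trans (map_one _).symm)

/-- If a semidirect product F ⋊ ℤ with F finite has bCyc, then F is trivial. -/
theorem stmt_6 {F : Type*} [Group F] [Finite F] (φ : Multiplicative ℤ →* MulAut F)
    (h : bCyc (F ⋊[φ] Multiplicative ℤ)) : ∀ f : F, f = 1 :=
  stmt_6_general isMulTorsion_of_finite φ (isOfFinOrder_of_finite _) h
end
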